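/- arXiv:2411.10553 — 6 statements merged into one kernel-verified Lean document; each statement's English description precedes it below -/
import Mathlib

section
/- Let N ∈ ℕ be such that k_N (the largest k ≤ N with μ_N − r_N ≥ 2 μ_{k}) exists, and assume σ_N < ∞, σ_{k_N} < ∞ and ρ_N < ∞. Then for all square-summable sequences x, y : ℕ → [0,∞) one has Σ_{n ≥ N} Σ_{k ≠ n} (ω_n ω_k / |μ_n − μ_k|) · x_k · y_n ≤ ( σ_N · max{2 ρ_N, σ_{k_N}} )^{1/2} · (Σ_k x_k²)^{1/2} · (Σ_n y_n²)^{1/2}; that is, the infinite matrix with entries M_{nk} = ω_n ω_k/|μ_n − μ_k| for n ≥ N, n ≠ k (and 0 otherwise) defines a bounded operator on ℓ² with squared norm at most σ_N · max{2 ρ_N, σ_{k_N}}. -/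
open scoped ENNReal

/-- `σ_N = sup_{n ≥ N} ( Σ_{j ≠ n} ω_j²/|μ_n − μ_j| + ω_n²/r_n )`, valued in `[0,∞]`. -/
noncomputable def sigmaN (μ ω r : ℕ → ℝ) (N : ℕ) : ℝ≥0∞ :=
  ⨆ n, ⨆ (_ : N ≤ n),
    ((∑' j : ℕ, if 1 ≤ j ∧ j ≠ n then ENNReal.ofReal (ω j ^ 2 / |μ n - μ j|) else 0)
      + ENNReal.ofReal (ω n ^ 2 / r n))

/-- `ρ_N = Σ_{n ≥ N} ω_n²/μ_n`, valued in `[0,∞]`. -/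
noncomputable def rhoN (μ ω : ℕ → ℝ) (N : ℕ) : ℝ≥0∞ :=
  ∑' n : ℕ, if N ≤ n then ENNReal.ofReal (ω n ^ 2 / μ n) else 0

/-- `k_N`, the largest `k ≤ N` (with `k ≥ 1`) such that `μ_N − r_N ≥ 2 μ_k`. -/
noncomputable def kN (μ r : ℕ → ℝ) (N : ℕ) : ℕ :=
  sSup {k : ℕ | 1 ≤ k ∧ k ≤ N ∧ 2 * μ k ≤ μ N - r N}

/-!
Split `ω_n ω_k / |μ_n - μ_k| · x_k y_n` as
`(ω_k |μ_n - μ_k|^{-1/2} y_n) · (ω_n |μ_n - μ_k|^{-1/2} x_k)` and apply the Cauchy–Schwarz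
inequality to the double sum. Each row sum `∑_k ω_k² / |μ_n - μ_k|` with `n ≥ N` is at most `σ_N`.
For `K = k_N`, or any other `K` with `2 μ_K ≤ μ_N`, a column sum `∑_{n ≥ N} ω_n² / |μ_n - μ_k|` is
at most `σ_K` if `k ≥ K`, while for `k ≤ K` one has `|μ_n - μ_k| ≥ μ_n / 2` for all `n ≥ N`, which
bounds it by `2 ρ_N`.
-/

section SchurTest

variable {ι κ : Type*} {p q : ℝ}

theorem tsum_mul_le_rpow_tsum_mul_rpow_tsum (hpq : p.HolderConjugate q) (f g : ι → ℝ≥0∞) :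
    ∑' i, f i * g i ≤ (∑' i, f i ^ p) ^ (1 / p) * (∑' i, g i ^ q) ^ (1 / q) := by
  let _ : MeasurableSpace ι := ⊤
  simpa [MeasureTheory.lintegral_count] using
    ENNReal.lintegral_mul_le_Lp_mul_Lq MeasureTheory.Measure.count hpq
      (f := f) (g := g) measurable_from_top.aemeasurable measurable_from_top.aemeasurable

theorem tsum_tsum_mul_le_mul_tsum {a : ι → κ → ℝ≥0∞} {A : ℝ≥0∞} (ha : ∀ i, ∑' j, a i j ≤ A)
    (z : ι → ℝ≥0∞) : ∑' i, ∑' j, a i j * z i ≤ A * ∑' i, z i := by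
  simp_rw [ENNReal.tsum_mul_right, ← ENNReal.tsum_mul_left]
  gcongr with i
  exact ha i

theorem rpow_one_div_mul_mul_rpow (hp : 0 < p) (a b c : ℝ≥0∞) :
    (a ^ (1 / p) * (b * c)) ^ p = a * b ^ p * c ^ p := by
  rw [ENNReal.mul_rpow_of_nonneg _ _ hp.le, ENNReal.mul_rpow_of_nonneg _ _ hp.le,
    ← ENNReal.rpow_mul, one_div_mul_cancel hp.ne', ENNReal.rpow_one, mul_assoc]

theorem schur_test (hpq : p.HolderConjugate q) {a : ι → κ → ℝ≥0∞} {u : ι → ℝ≥0∞} {v : κ → ℝ≥0∞}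
    {A B : ℝ≥0∞} (hrow : ∀ i, ∑' j, a i j * v j ^ p ≤ A) (hcol : ∀ j, ∑' i, a i j * u i ^ q ≤ B)
    (x : κ → ℝ≥0∞) (y : ι → ℝ≥0∞) :
    ∑' i, ∑' j, a i j * (u i * v j) * x j * y i ≤
      A ^ (1 / p) * B ^ (1 / q) * (∑' j, x j ^ q) ^ (1 / q) * (∑' i, y i ^ p) ^ (1 / p) := by
  let f : ι × κ → ℝ≥0∞ := fun s => a s.1 s.2 ^ (1 / p) * (v s.2 * y s.1)
  let g : ι × κ → ℝ≥0∞ := fun s => a s.1 s.2 ^ (1 / q) * (u s.1 * x s.2)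
  have split_entry (i : ι) (j : κ) : a i j * (u i * v j) * x j * y i = f (i, j) * g (i, j) := by
    have : a i j = a i j ^ (1 / p) * a i j ^ (1 / q) := by
      rw [← ENNReal.rpow_add_of_nonneg _ _ hpq.one_div_nonneg hpq.symm.one_div_nonneg,
        hpq.one_div_add_one_div, one_div_one, ENNReal.rpow_one]
    nth_rewrite 1 [this]
    ring
  have hf : ∑' s, f s ^ p ≤ A * ∑' i, y i ^ p := by
    simp_rw [f, rpow_one_div_mul_mul_rpow hpq.pos, ENNReal.tsum_prod']
    exact tsum_tsum_mul_le_mul_tsum hrow _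
  have hg : ∑' s, g s ^ q ≤ B * ∑' j, x j ^ q := by
    simp_rw [g, rpow_one_div_mul_mul_rpow hpq.symm.pos, ENNReal.tsum_prod']
    rw [ENNReal.tsum_comm]
    exact tsum_tsum_mul_le_mul_tsum hcol _
  calc ∑' i, ∑' j, a i j * (u i * v j) * x j * y i
      = ∑' s, f s * g s := by simp_rw [split_entry, ENNReal.tsum_prod']
    _ ≤ (∑' s, f s ^ p) ^ (1 / p) * (∑' s, g s ^ q) ^ (1 / q) :=
      tsum_mul_le_rpow_tsum_mul_rpow_tsum hpq f g
    _ ≤ (A * ∑' i, y i ^ p) ^ (1 / p) * (B * ∑' j, x j ^ q) ^ (1 / q) := by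
      gcongr
      exacts [hpq.one_div_nonneg, hpq.symm.one_div_nonneg]
    _ = A ^ (1 / p) * B ^ (1 / q) * (∑' j, x j ^ q) ^ (1 / q) * (∑' i, y i ^ p) ^ (1 / p) := by
      rw [ENNReal.mul_rpow_of_nonneg _ _ hpq.one_div_nonneg,
        ENNReal.mul_rpow_of_nonneg _ _ hpq.symm.one_div_nonneg]
      ring

end SchurTest

/-- The matrix `1 / |μ_n - μ_k|` with rows `n ≥ N`, columns `k ≥ 1` and zero diagonal, padded by
zeros to a matrix indexed by all of `ℕ`. The weights `ω` are left out, because they enter the Schur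
test separately. -/
noncomputable def invGapKernel (μ : ℕ → ℝ) (N n k : ℕ) : ℝ≥0∞ :=
  if N ≤ n ∧ 1 ≤ k ∧ k ≠ n then ‖(μ n - μ k)⁻¹‖ₑ else 0

section KernelBounds

variable (μ ω r : ℕ → ℝ) {N K n k : ℕ}

theorem enorm_sq_eq_ofReal_sq (t : ℝ) : ‖t‖ₑ ^ 2 = ENNReal.ofReal (t ^ 2) := by
  rw [← enorm_pow, Real.enorm_of_nonneg (sq_nonneg t)]

theorem invGapKernel_mul_enorm_sq (t : ℝ) :
    invGapKernel μ N n k * ‖t‖ₑ ^ 2 =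
      if N ≤ n ∧ 1 ≤ k ∧ k ≠ n then ENNReal.ofReal (t ^ 2 / |μ n - μ k|) else 0 := by
  unfold invGapKernel
  split_ifs
  · rw [enorm_sq_eq_ofReal_sq, Real.enorm_eq_ofReal_abs, ← ENNReal.ofReal_mul (abs_nonneg _),
      abs_inv, mul_comm, div_eq_mul_inv]
  · rw [zero_mul]

theorem tsum_sq_div_abs_sub_le_sigmaN (hn : N ≤ n) :
    ∑' j : ℕ, (if 1 ≤ j ∧ j ≠ n then ENNReal.ofReal (ω j ^ 2 / |μ n - μ j|) else 0) ≤
      sigmaN μ ω r N :=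
  le_self_add.trans (le_iSup₂_of_le n hn le_rfl)

theorem tsum_invGapKernel_row_le_sigmaN (n : ℕ) :
    ∑' k, invGapKernel μ N n k * ‖ω k‖ₑ ^ 2 ≤ sigmaN μ ω r N := by
  simp_rw [invGapKernel_mul_enorm_sq]
  by_cases hn : N ≤ n
  · simpa only [hn, true_and] using tsum_sq_div_abs_sub_le_sigmaN μ ω r hn
  · simp [hn]

theorem tsum_invGapKernel_col_le_sigmaN (hN : 1 ≤ N) (hk : K ≤ k) :
    ∑' n, invGapKernel μ N n k * ‖ω n‖ₑ ^ 2 ≤ sigmaN μ ω r K := by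
  refine le_trans ?_ (tsum_sq_div_abs_sub_le_sigmaN μ ω r hk)
  gcongr with n
  rw [invGapKernel_mul_enorm_sq, abs_sub_comm]
  split_ifs with hnk hkn
  · rfl
  · exact absurd ⟨hN.trans hnk.1, hnk.2.2.symm⟩ hkn
  all_goals exact zero_le

variable {μ}

theorem half_le_abs_sub_of_two_mul_le (hμ : MonotoneOn μ (Set.Ici 1)) (hN : 1 ≤ N)
    (hK : 2 * μ K ≤ μ N) (hn : N ≤ n) (hk : 1 ≤ k) (hkK : k ≤ K) : μ n / 2 ≤ |μ n - μ k| := by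
  have hkK' : μ k ≤ μ K := hμ hk (hk.trans hkK) hkK
  have hNn : μ N ≤ μ n := hμ hN (hN.trans hn) hn
  exact le_trans (by linarith) (le_abs_self _)

theorem tsum_invGapKernel_col_le_two_mul_rhoN (hμ1 : 0 < μ 1) (hμ : MonotoneOn μ (Set.Ici 1))
    (hN : 1 ≤ N) (hK : 2 * μ K ≤ μ N) (hkK : k ≤ K) :
    ∑' n, invGapKernel μ N n k * ‖ω n‖ₑ ^ 2 ≤ 2 * rhoN μ ω N := by
  rw [rhoN, ← ENNReal.tsum_mul_left]
  refine ENNReal.tsum_le_tsum fun n => ?_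
  rw [invGapKernel_mul_enorm_sq]
  split_ifs with hnk hn
  · obtain ⟨hn, hk, -⟩ := hnk
    have hμn : 0 < μ n := hμ1.trans_le (hμ Set.self_mem_Ici (hN.trans hn) (hN.trans hn))
    have hgap := half_le_abs_sub_of_two_mul_le hμ hN hK hn hk hkK
    rw [← ENNReal.ofReal_ofNat 2, ← ENNReal.ofReal_mul zero_le_two]
    gcongr
    calc ω n ^ 2 / |μ n - μ k| ≤ ω n ^ 2 / (μ n / 2) := by gcongr
      _ = 2 * (ω n ^ 2 / μ n) := by ring
  · exact absurd hnk.1 hn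
  all_goals exact zero_le

theorem tsum_invGapKernel_col_le_max (hμ1 : 0 < μ 1) (hμ : MonotoneOn μ (Set.Ici 1))
    (hN : 1 ≤ N) (hK : 2 * μ K ≤ μ N) (k : ℕ) :
    ∑' n, invGapKernel μ N n k * ‖ω n‖ₑ ^ 2 ≤ max (2 * rhoN μ ω N) (sigmaN μ ω r K) :=
  (le_total k K).elim
    (fun hk => (tsum_invGapKernel_col_le_two_mul_rhoN ω hμ1 hμ hN hK hk).trans (le_max_left _ _))
    (fun hk => (tsum_invGapKernel_col_le_sigmaN μ ω r hN hk).trans (le_max_right _ _))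

end KernelBounds

section Cutoff

variable {μ r : ℕ → ℝ}

theorem half_gap_nonneg (hμ : MonotoneOn μ (Set.Ici 1)) (hr1 : r 1 = (μ 2 - μ 1) / 2)
    (hrn : ∀ n, 2 ≤ n → r n = min (μ n - μ (n - 1)) (μ (n + 1) - μ n) / 2) {n : ℕ} (hn : 1 ≤ n) :
    0 ≤ r n := by
  have step {m : ℕ} (hm : 1 ≤ m) : 0 ≤ μ (m + 1) - μ m :=
    sub_nonneg.2 (hμ hm (Nat.le_add_left 1 m) m.le_succ)
  obtain rfl | hn2 := hn.eq_or_lt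
  · rw [hr1]
    exact div_nonneg (step le_rfl) zero_le_two
  · obtain ⟨m, rfl⟩ := Nat.exists_eq_add_of_le' hn
    rw [hrn _ hn2, Nat.add_sub_cancel]
    exact div_nonneg (le_min (step (Nat.lt_add_left_iff_pos.1 hn2)) (step hn)) zero_le_two

theorem two_mul_kN_le {N : ℕ} (hkex : {k : ℕ | 1 ≤ k ∧ k ≤ N ∧ 2 * μ k ≤ μ N - r N}.Nonempty)
    (hr : 0 ≤ r N) : 2 * μ (kN μ r N) ≤ μ N :=
  (Nat.sSup_mem hkex ⟨N, fun _ hk => hk.2.1⟩).2.2.trans (sub_le_self _ hr)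

end Cutoff

theorem statement4_general {μ : ℕ → ℝ} (hμ1 : 0 < μ 1) (hμ : StrictMonoOn μ (Set.Ici 1))
    (ω r : ℕ → ℝ) {N K : ℕ} (hN : 1 ≤ N) (hK : 2 * μ K ≤ μ N) (x y : ℕ → ℝ) :
    (∑' n : ℕ, ∑' k : ℕ,
        if N ≤ n ∧ 1 ≤ k ∧ k ≠ n then ‖ω n * ω k / |μ n - μ k| * x k * y n‖ₑ else 0)
      ≤ (sigmaN μ ω r N * max (2 * rhoN μ ω N) (sigmaN μ ω r K)) ^ (1 / 2 : ℝ)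
        * (∑' k : ℕ, if 1 ≤ k then ENNReal.ofReal (x k ^ 2) else 0) ^ (1 / 2 : ℝ)
        * (∑' n : ℕ, if 1 ≤ n then ENNReal.ofReal (y n ^ 2) else 0) ^ (1 / 2 : ℝ) := by
  let truncate (z : ℕ → ℝ) (n : ℕ) : ℝ≥0∞ := if 1 ≤ n then ‖z n‖ₑ else 0
  have truncate_sq (z : ℕ → ℝ) (n : ℕ) :
      truncate z n ^ 2 = if 1 ≤ n then ENNReal.ofReal (z n ^ 2) else 0 := by
    simp only [truncate, ite_pow, enorm_sq_eq_ofReal_sq, zero_pow two_ne_zero]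
  have entry_eq (n k : ℕ) :
      (if N ≤ n ∧ 1 ≤ k ∧ k ≠ n then ‖ω n * ω k / |μ n - μ k| * x k * y n‖ₑ else 0) =
        invGapKernel μ N n k * (‖ω n‖ₑ * ‖ω k‖ₑ) * truncate x k * truncate y n := by
    unfold invGapKernel
    split_ifs with h
    · simp only [truncate, h.2.1, hN.trans h.1, if_true, div_eq_inv_mul, enorm_mul, ← abs_inv,
        Real.enorm_abs]
    · simp only [zero_mul]
  have schur := schur_test Real.HolderConjugate.two_two
    (a := invGapKernel μ N) (u := (‖ω ·‖ₑ)) (v := (‖ω ·‖ₑ))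
    (by simpa only [ENNReal.rpow_two] using tsum_invGapKernel_row_le_sigmaN μ ω r)
    (by simpa only [ENNReal.rpow_two] using
      tsum_invGapKernel_col_le_max ω r hμ1 hμ.monotoneOn hN hK)
    (truncate x) (truncate y)
  simpa only [entry_eq, ENNReal.mul_rpow_of_nonneg _ _ one_half_pos.le, ENNReal.rpow_two,
    truncate_sq] using schur

theorem statement4 (μ ω r : ℕ → ℝ)
    (hμ1 : 0 < μ 1)
    (hμmono : ∀ n, 1 ≤ n → μ n < μ (n + 1))
    (hμtop : Filter.Tendsto μ Filter.atTop Filter.atTop)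
    (hr1 : r 1 = (μ 2 - μ 1) / 2)
    (hrn : ∀ n, 2 ≤ n → r n = min (μ n - μ (n - 1)) (μ (n + 1) - μ n) / 2)
    (hω : ∀ j, 0 ≤ ω j)
    (N : ℕ)
    (hkex : {k : ℕ | 1 ≤ k ∧ k ≤ N ∧ 2 * μ k ≤ μ N - r N}.Nonempty)
    (hσN : sigmaN μ ω r N < ⊤)
    (hσk : sigmaN μ ω r (kN μ r N) < ⊤)
    (hρ : rhoN μ ω N < ⊤)
    (x y : ℕ → ℝ) (hx0 : ∀ k, 0 ≤ x k) (hy0 : ∀ n, 0 ≤ y n)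
    (hx2 : Summable fun k => x k ^ 2) (hy2 : Summable fun n => y n ^ 2) :
    (∑' n : ℕ, ∑' k : ℕ,
        if N ≤ n ∧ 1 ≤ k ∧ k ≠ n then
          ENNReal.ofReal (ω n * ω k / |μ n - μ k| * x k * y n) else 0)
      ≤ (sigmaN μ ω r N * max (2 * rhoN μ ω N) (sigmaN μ ω r (kN μ r N))) ^ (1/2 : ℝ)
        * (∑' k : ℕ, if 1 ≤ k then ENNReal.ofReal (x k ^ 2) else 0) ^ (1/2 : ℝ)
        * (∑' n : ℕ, if 1 ≤ n then ENNReal.ofReal (y n ^ 2) else 0) ^ (1/2 : ℝ) := by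
  have hμ : StrictMonoOn μ (Set.Ici 1) :=
    strictMonoOn_of_lt_add_one Set.ordConnected_Ici fun n _ hn _ => hμmono n hn
  have hN : 1 ≤ N := hkex.elim fun _ hk => hk.1.trans hk.2.1
  have hK := two_mul_kN_le hkex (half_gap_nonneg hμ.monotoneOn hr1 hrn hN)
  refine le_trans ?_ (statement4_general hμ1 hμ ω r hN hK x y)
  gcongr with n k
  split_ifs
  exacts [Real.ofReal_le_enorm _, le_rfl]
end

section
/- Let t : ℕ → [0,∞) (indices k ≥ 1) satisfy Σ_{k=1}^∞ t_k/k < ∞ and t_k · log k → 0 as k → ∞. Then Σ_{k ≠ n} t_k/|k − n| → 0 as n → ∞. -/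
/-!
Split the sum at the window `n / 2 < k < 2 * n`. Outside the window `|k - n| ≥ k / 2`, so the terms
are dominated by `2 * ‖t k‖ / k`, which is summable, and dominated convergence applies. Inside the
window `log k` is comparable to `log n`, so `‖t k‖ = o(1 / log n)` uniformly, while the sum of
`1 / |k - n|` is at most `2 * (1 + log n)` by the logarithmic bound on harmonic numbers.
-/

open Filter Finset Topology

section Kernel

lemma sum_range_inv_abs_sub_eq_harmonic (n : ℕ) :
    ∑ k ∈ range n, |(k : ℝ) - n|⁻¹ = harmonic n := by
  rw [← sum_range_reflect, harmonic, Rat.cast_sum]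
  refine sum_congr rfl fun i hi => ?_
  have hcast : ((n - 1 - i : ℕ) : ℝ) - n = -(i + 1) := by
    rw [Nat.sub_sub, Nat.cast_sub (by grind)]
    push_cast
    ring
  rw [hcast, abs_neg, abs_of_pos (by positivity)]
  push_cast
  rfl

lemma sum_range_succ_inv_eq_harmonic (n : ℕ) :
    ∑ k ∈ range (n + 1), (k : ℝ)⁻¹ = harmonic n := by
  simp [sum_range_succ', harmonic]

-- The diagonal term `k = n` contributes `0⁻¹ = 0`.
lemma sum_range_inv_abs_sub_eq_two_mul_harmonic (n : ℕ) :
    ∑ k ∈ range (2 * n + 1), |(k : ℝ) - n|⁻¹ = 2 * harmonic n := by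
  rw [show 2 * n + 1 = n + (n + 1) by ring, sum_range_add, sum_range_inv_abs_sub_eq_harmonic,
    two_mul, ← sum_range_succ_inv_eq_harmonic]
  simp

lemma sum_Ioo_inv_abs_sub_le (n : ℕ) :
    ∑ k ∈ Ioo (n / 2) (2 * n), |(k : ℝ) - n|⁻¹ ≤ 2 * (1 + Real.log n) :=
  calc ∑ k ∈ Ioo (n / 2) (2 * n), |(k : ℝ) - n|⁻¹
      ≤ ∑ k ∈ range (2 * n + 1), |(k : ℝ) - n|⁻¹ :=
        sum_le_sum_of_subset_of_nonneg (fun k hk => by grind) fun _ _ _ => by positivity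
    _ = 2 * harmonic n := sum_range_inv_abs_sub_eq_two_mul_harmonic n
    _ ≤ 2 * (1 + Real.log n) := by
        gcongr
        exact harmonic_le_one_add_log n

lemma half_le_abs_sub_of_notMem_Ioo {n k : ℕ} (hk : k ∉ Ioo (n / 2) (2 * n)) :
    (k : ℝ) / 2 ≤ |(k : ℝ) - n| := by
  have hfar : 2 * k ≤ n ∨ 2 * n ≤ k := by grind
  rcases hfar with hle | hge
  · have : (2 * k : ℝ) ≤ n := mod_cast hle
    linarith [neg_le_abs ((k : ℝ) - n), (Nat.cast_nonneg k : (0 : ℝ) ≤ k)]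
  · have : (2 * n : ℝ) ≤ k := mod_cast hge
    linarith [le_abs_self ((k : ℝ) - n)]

lemma tendsto_inv_abs_sub_natCast (x : ℝ) :
    Tendsto (fun n : ℕ => |x - n|⁻¹) atTop (𝓝 0) := by
  have hsub : Tendsto (fun n : ℕ => x - n) atTop atBot :=
    tendsto_atBot_add_const_left _ x (tendsto_neg_atTop_atBot.comp tendsto_natCast_atTop_atTop)
  exact (tendsto_abs_atBot_atTop.comp hsub).inv_tendsto_atTop

end Kernel

lemma one_add_log_le_two_mul_log {x y : ℝ} (hx : 0 < x) (hy : 6 ≤ y) (hxy : x ≤ 2 * y) :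
    1 + Real.log x ≤ 2 * Real.log y :=
  calc 1 + Real.log x = Real.log (Real.exp 1 * x) := by
        rw [Real.log_mul (Real.exp_ne_zero 1) hx.ne', Real.log_exp]
    _ ≤ Real.log (y ^ 2) := by
        gcongr
        nlinarith [Real.exp_one_lt_three]
    _ = 2 * Real.log y := by simp

section Convolution

variable {E : Type*} [NormedAddCommGroup E]

lemma eventually_forall_norm_mul_one_add_log_le {t : ℕ → E}
    (hlog : Tendsto (fun k : ℕ => ‖t k‖ * Real.log k) atTop (𝓝 0)) {ε : ℝ} (hε : 0 < ε) :
    ∀ᶠ n : ℕ in atTop, ∀ k : ℕ, n ≤ 2 * k → ‖t k‖ * (1 + Real.log n) ≤ ε := by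
  obtain ⟨N, hN⟩ := eventually_atTop.1 (hlog.eventually_le_const (half_pos hε))
  filter_upwards [eventually_ge_atTop (2 * N + 12)] with n hn k hnk
  have hlog_le : 1 + Real.log n ≤ 2 * Real.log k :=
    one_add_log_le_two_mul_log (Nat.cast_pos.2 (by lia)) (mod_cast (by lia : 6 ≤ k))
      (mod_cast hnk)
  calc ‖t k‖ * (1 + Real.log n) ≤ ‖t k‖ * (2 * Real.log k) := by gcongr
    _ = 2 * (‖t k‖ * Real.log k) := by ring
    _ ≤ ε := by linarith [hN k (by lia)]

variable [NormedSpace ℝ E]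

/-- The `k`-th term of the convolution of the sequence `t`, indexed from `1`, with the kernel
`1 / |j|`, `j ≠ 0`, evaluated at `n`. The excluded indices `k = 0` and `k = n` are given the term
`0`, so that sums can range over all of `ℕ`. -/
noncomputable def invDistTerm (t : ℕ → E) (n k : ℕ) : E :=
  if 1 ≤ k ∧ k ≠ n then |(k : ℝ) - n|⁻¹ • t k else 0

lemma norm_invDistTerm_le (t : ℕ → E) (n k : ℕ) :
    ‖invDistTerm t n k‖ ≤ |(k : ℝ) - n|⁻¹ * ‖t k‖ := by
  unfold invDistTerm
  split_ifs
  · simp [norm_smul]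
  · rw [norm_zero]
    positivity

lemma norm_invDistTerm_le_of_notMem_Ioo (t : ℕ → E) {n k : ℕ} (hk : k ∉ Ioo (n / 2) (2 * n)) :
    ‖invDistTerm t n k‖ ≤ 2 * (‖t k‖ / k) := by
  rcases k.eq_zero_or_pos with rfl | hpos
  · simp [invDistTerm]
  calc ‖invDistTerm t n k‖ ≤ |(k : ℝ) - n|⁻¹ * ‖t k‖ := norm_invDistTerm_le t n k
    _ ≤ ((k : ℝ) / 2)⁻¹ * ‖t k‖ := by
        gcongr
        exact half_le_abs_sub_of_notMem_Ioo hk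
    _ = 2 * (‖t k‖ / k) := by
        rw [inv_div]
        ring

lemma tendsto_invDistTerm (t : ℕ → E) (k : ℕ) :
    Tendsto (fun n => invDistTerm t n k) atTop (𝓝 0) :=
  squeeze_zero_norm (fun n => norm_invDistTerm_le t n k) <| by
    simpa using (tendsto_inv_abs_sub_natCast k).mul_const ‖t k‖

lemma tendsto_sum_Ioo_invDistTerm {t : ℕ → E}
    (hlog : Tendsto (fun k : ℕ => ‖t k‖ * Real.log k) atTop (𝓝 0)) :
    Tendsto (fun n => ∑ k ∈ Ioo (n / 2) (2 * n), invDistTerm t n k) atTop (𝓝 0) := by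
  refine NormedAddGroup.tendsto_nhds_zero.2 fun ε hε => ?_
  filter_upwards [eventually_forall_norm_mul_one_add_log_le hlog (by positivity : 0 < ε / 3)]
    with n hn
  have hL : 0 < 1 + Real.log n := by linarith [Real.log_natCast_nonneg n]
  calc ‖∑ k ∈ Ioo (n / 2) (2 * n), invDistTerm t n k‖
      ≤ ∑ k ∈ Ioo (n / 2) (2 * n), |(k : ℝ) - n|⁻¹ * (ε / 3 / (1 + Real.log n)) := by
        refine norm_sum_le_of_le _ fun k hk => (norm_invDistTerm_le t n k).trans ?_
        gcongr
        exact (le_div_iff₀ hL).2 (hn k (by grind))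
    _ = (∑ k ∈ Ioo (n / 2) (2 * n), |(k : ℝ) - n|⁻¹) * (ε / 3 / (1 + Real.log n)) :=
        (sum_mul ..).symm
    _ ≤ 2 * (1 + Real.log n) * (ε / 3 / (1 + Real.log n)) := by
        gcongr
        exact sum_Ioo_inv_abs_sub_le n
    _ = 2 / 3 * ε := by field_simp
    _ < ε := by linarith

variable [CompleteSpace E]

lemma summable_invDistTerm {t : ℕ → E} (hsum : Summable fun k : ℕ => ‖t k‖ / k) (n : ℕ) :
    Summable (invDistTerm t n) := by
  refine (hsum.mul_left 2).of_norm_bounded_eventually ?_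
  filter_upwards [(Ioo (n / 2) (2 * n)).eventually_cofinite_notMem] with k hk
  exact norm_invDistTerm_le_of_notMem_Ioo t hk

lemma tendsto_tsum_compl_Ioo_invDistTerm {t : ℕ → E}
    (hsum : Summable fun k : ℕ => ‖t k‖ / k) :
    Tendsto (fun n => ∑' k : ((Ioo (n / 2) (2 * n) : Set ℕ)ᶜ : Set ℕ), invDistTerm t n k)
      atTop (𝓝 0) := by
  simp only [_root_.tsum_subtype _ (invDistTerm t _)]
  rw [← tsum_zero (α := E) (β := ℕ)]
  refine tendsto_tsum_of_dominated_convergence (hsum.mul_left 2) (fun k => ?_)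
    (.of_forall fun n k => ?_)
  · exact squeeze_zero_norm (fun n => norm_indicator_le_norm_self _ _)
      (tendsto_zero_iff_norm_tendsto_zero.1 (tendsto_invDistTerm t k))
  · by_cases hk : k ∈ Ioo (n / 2) (2 * n)
    · rw [Set.indicator_of_notMem (Set.notMem_compl_iff.2 (mem_coe.2 hk)), norm_zero]
      positivity
    · exact (norm_indicator_le_norm_self _ _).trans (norm_invDistTerm_le_of_notMem_Ioo t hk)

theorem statement8_general (t : ℕ → E)
    (hsum : Summable fun k : ℕ => if 1 ≤ k then ‖t k‖ / k else 0)
    (hlog : Tendsto (fun k : ℕ => ‖t k‖ * Real.log k) atTop (𝓝 0)) :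
    Tendsto (fun n : ℕ => ∑' k : ℕ, if 1 ≤ k ∧ k ≠ n then |(k : ℝ) - n|⁻¹ • t k else 0)
      atTop (𝓝 0) := by
  have hsum' : Summable fun k : ℕ => ‖t k‖ / k :=
    hsum.congr fun k => by rcases k with _ | k <;> simp
  have hlim := (tendsto_sum_Ioo_invDistTerm hlog).add (tendsto_tsum_compl_Ioo_invDistTerm hsum')
  rw [add_zero] at hlim
  exact hlim.congr fun n => (summable_invDistTerm hsum' n).sum_add_tsum_compl

end Convolution

theorem statement8 (t : ℕ → ℝ) (ht0 : ∀ k, 0 ≤ t k)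
    (hsum : Summable fun k : ℕ => if 1 ≤ k then t k / k else 0)
    (hlog : Filter.Tendsto (fun k : ℕ => t k * Real.log k) Filter.atTop (nhds 0)) :
    Filter.Tendsto
      (fun n : ℕ => ∑' k : ℕ, if 1 ≤ k ∧ k ≠ n then t k / |(k : ℝ) - (n : ℝ)| else 0)
      Filter.atTop (nhds 0) := by
  have hnorm (k : ℕ) : ‖t k‖ = t k := Real.norm_of_nonneg (ht0 k)
  simpa only [smul_eq_mul, ← div_eq_inv_mul] using
    statement8_general t (by simpa only [hnorm]) (by simpa only [hnorm])
end

section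
/- Let t : ℕ → [0,∞) (indices k ≥ 1) be nonincreasing with Σ_{k=1}^∞ t_k/k < ∞. Then t_n · log n → 0 as n → ∞, and consequently Σ_{k ≠ n} t_k/|k − n| → 0 as n → ∞. -/
/-!
Write `s k = t (k + 1)` and `w k = 1 / (k + 1)`. Both are antitone with limit `0`, and `∑ s k * w k`
converges. By dominated convergence `∑ s (φ n k) * w k → 0` whenever `k ≤ φ n k` and `φ n k → ∞` as
`n → ∞`, since the terms are bounded by `s k * w k`. Every estimate is an instance of this:

* `φ n k = max n k` bounds `s n * ∑_{k ≤ n} w k`, hence `s n * log (n + 1)`;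
* `φ n k = k + n + 1` is the part `k > n` of `∑_{k ≠ n} s k / |k - n|`;
* the part `k < n` is the convolution `∑_{i + j = m} s i * w j` with `m = n - 1`, which is symmetric
  in `s` and `w`: the terms with `j ≤ i` are handled by `φ m j = max j (m - j)`, those with `i ≤ j`
  by exchanging `s` and `w`.
-/

open Filter Topology
open Finset.HasAntidiagonal (antidiagonal)

section AntitoneWeights

variable {s w : ℕ → ℝ}

theorem frequently_abs_lt_of_summable_mul (hw : ¬Summable w)
    (hsw : Summable fun k => s k * w k) {ε : ℝ} (hε : 0 < ε) : ∃ᶠ k in atTop, |s k| < ε := by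
  intro eventually_large
  refine hw (summable_of_isBigO_nat hsw (.of_bound ε⁻¹ ?_))
  filter_upwards [eventually_large] with k hk
  rw [norm_mul, ← div_eq_inv_mul, le_div_iff₀' hε]
  exact mul_le_mul_of_nonneg_right (not_lt.mp hk) (norm_nonneg _)

theorem tendsto_zero_of_antitone_of_summable_mul (hs : Antitone s) (hw : ¬Summable w)
    (hsw : Summable fun k => s k * w k) : Tendsto s atTop (𝓝 0) := by
  rw [Metric.tendsto_atTop]
  intro ε hε
  have small_later := frequently_atTop.mp (frequently_abs_lt_of_summable_mul hw hsw hε)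
  obtain ⟨m, -, hm⟩ := small_later 0
  refine ⟨m, fun k hmk => ?_⟩
  obtain ⟨l, hkl, hl⟩ := small_later k
  rw [dist_zero_right, Real.norm_eq_abs, abs_lt]
  exact ⟨(abs_lt.mp hl).1.trans_le (hs hkl), (hs hmk).trans_lt (abs_lt.mp hm).2⟩

theorem summable_comp_mul_of_antitone (hs : Antitone s) (hs0 : Tendsto s atTop (𝓝 0))
    (hw : ∀ k, 0 ≤ w k) (hsw : Summable fun k => s k * w k) {φ : ℕ → ℕ} (hφ : ∀ k, k ≤ φ k) :
    Summable fun k => s (φ k) * w k :=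
  hsw.of_nonneg_of_le (fun k => mul_nonneg (hs.le_of_tendsto hs0 _) (hw k))
    fun k => mul_le_mul_of_nonneg_right (hs (hφ k)) (hw k)

theorem tendsto_tsum_comp_mul_of_antitone {ι : Type*} {l : Filter ι} (hs : Antitone s)
    (hs0 : Tendsto s atTop (𝓝 0)) (hw : ∀ k, 0 ≤ w k) (hsw : Summable fun k => s k * w k)
    {φ : ι → ℕ → ℕ} (hφ : ∀ n k, k ≤ φ n k) (hφ_top : ∀ k, Tendsto (φ · k) l atTop) :
    Tendsto (fun n => ∑' k, s (φ n k) * w k) l (𝓝 0) := by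
  have termwise (k : ℕ) : Tendsto (fun n => s (φ n k) * w k) l (𝓝 0) := by
    simpa using (hs0.comp (hφ_top k)).mul_const (w k)
  have dominated (n : ι) (k : ℕ) : ‖s (φ n k) * w k‖ ≤ s k * w k := by
    rw [Real.norm_of_nonneg (mul_nonneg (hs.le_of_tendsto hs0 _) (hw k))]
    exact mul_le_mul_of_nonneg_right (hs (hφ n k)) (hw k)
  simpa using tendsto_tsum_of_dominated_convergence hsw termwise (.of_forall dominated)

theorem tendsto_mul_sum_range_succ_of_antitone (hs : Antitone s) (hs0 : Tendsto s atTop (𝓝 0))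
    (hw : ∀ k, 0 ≤ w k) (hsw : Summable fun k => s k * w k) :
    Tendsto (fun n => s n * ∑ k ∈ Finset.range (n + 1), w k) atTop (𝓝 0) := by
  have s_nonneg := hs.le_of_tendsto hs0
  refine squeeze_zero (fun n => mul_nonneg (s_nonneg n) (Finset.sum_nonneg fun k _ => hw k))
    (fun n => ?_) (tendsto_tsum_comp_mul_of_antitone hs hs0 hw hsw (φ := max)
      le_max_right fun k => tendsto_atTop_mono (le_max_left · k) tendsto_id)
  calc s n * ∑ k ∈ Finset.range (n + 1), w k
      = ∑ k ∈ Finset.range (n + 1), s (max n k) * w k := by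
        rw [Finset.mul_sum]
        refine Finset.sum_congr rfl fun k hk => ?_
        rw [max_eq_left (Finset.mem_range_succ_iff.mp hk)]
    _ ≤ ∑' k, s (max n k) * w k :=
        (summable_comp_mul_of_antitone hs hs0 hw hsw (le_max_right n)).sum_le_tsum _
          fun k _ => mul_nonneg (s_nonneg _) (hw k)

theorem sum_antidiagonal_mul_le_of_antitone (hs : Antitone s) (hs0 : Tendsto s atTop (𝓝 0))
    (hw : Antitone w) (hw0 : Tendsto w atTop (𝓝 0)) (hsw : Summable fun k => s k * w k) (n : ℕ) :
    ∑ p ∈ antidiagonal n, s p.1 * w p.2 ≤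
      ∑' k, s (max k (n - k)) * w k + ∑' k, w (max k (n - k)) * s k := by
  have s_nonneg := hs.le_of_tendsto hs0
  have w_nonneg := hw.le_of_tendsto hw0
  have hws : Summable fun k => w k * s k := by simpa only [mul_comm] using hsw
  have term_le (k : ℕ) :
      s k * w (n - k) ≤ s (max (n - k) k) * w (n - k) + w (max k (n - k)) * s k := by
    rcases le_total k (n - k) with h | h
    · rw [max_eq_right h, mul_comm (s k)]
      exact le_add_of_nonneg_left (mul_nonneg (s_nonneg _) (w_nonneg _))
    · rw [max_eq_right h]
      exact le_add_of_nonneg_right (mul_nonneg (w_nonneg _) (s_nonneg _))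
  calc ∑ p ∈ antidiagonal n, s p.1 * w p.2
      = ∑ k ∈ Finset.range (n + 1), s k * w (n - k) :=
        Finset.Nat.sum_antidiagonal_eq_sum_range_succ (fun i j => s i * w j) n
    _ ≤ ∑ k ∈ Finset.range (n + 1),
          (s (max (n - k) k) * w (n - k) + w (max k (n - k)) * s k) :=
        Finset.sum_le_sum fun k _ => term_le k
    _ = ∑ k ∈ Finset.range (n + 1), s (max k (n - k)) * w k +
          ∑ k ∈ Finset.range (n + 1), w (max k (n - k)) * s k := by
        rw [Finset.sum_add_distrib, ← Finset.sum_range_reflect (fun k => s (max k (n - k)) * w k)]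
        congr 1
        refine Finset.sum_congr rfl fun k hk => ?_
        rw [Nat.add_sub_cancel, Nat.sub_sub_self (Finset.mem_range_succ_iff.mp hk)]
    _ ≤ ∑' k, s (max k (n - k)) * w k + ∑' k, w (max k (n - k)) * s k :=
        add_le_add
          ((summable_comp_mul_of_antitone hs hs0 w_nonneg hsw fun k =>
            le_max_left k (n - k)).sum_le_tsum _ fun k _ => mul_nonneg (s_nonneg _) (w_nonneg _))
          ((summable_comp_mul_of_antitone hw hw0 s_nonneg hws fun k =>
            le_max_left k (n - k)).sum_le_tsum _ fun k _ => mul_nonneg (w_nonneg _) (s_nonneg _))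

theorem tendsto_sum_antidiagonal_mul_of_antitone (hs : Antitone s)
    (hs0 : Tendsto s atTop (𝓝 0)) (hw : Antitone w) (hw0 : Tendsto w atTop (𝓝 0))
    (hsw : Summable fun k => s k * w k) :
    Tendsto (fun n => ∑ p ∈ antidiagonal n, s p.1 * w p.2) atTop (𝓝 0) := by
  have s_nonneg := hs.le_of_tendsto hs0
  have w_nonneg := hw.le_of_tendsto hw0
  have hws : Summable fun k => w k * s k := by simpa only [mul_comm] using hsw
  have le_max_self (n k : ℕ) : k ≤ max k (n - k) := le_max_left _ _
  have max_tendsto (k : ℕ) : Tendsto (fun n => max k (n - k)) atTop atTop :=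
    tendsto_atTop_mono (fun _ => le_max_right _ _) (tendsto_sub_atTop_nat k)
  refine squeeze_zero
    (fun n => Finset.sum_nonneg fun p _ => mul_nonneg (s_nonneg p.1) (w_nonneg p.2))
    (sum_antidiagonal_mul_le_of_antitone hs hs0 hw hw0 hsw) ?_
  simpa only [add_zero] using
    (tendsto_tsum_comp_mul_of_antitone hs hs0 w_nonneg hsw le_max_self max_tendsto).add
      (tendsto_tsum_comp_mul_of_antitone hw hw0 s_nonneg hws le_max_self max_tendsto)

end AntitoneWeights

section HarmonicWeights

theorem antitone_inv_natCast_add_one : Antitone fun k : ℕ => ((k : ℝ) + 1)⁻¹ :=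
  fun _ _ h => by dsimp only; gcongr

theorem tendsto_inv_natCast_add_one :
    Tendsto (fun k : ℕ => ((k : ℝ) + 1)⁻¹) atTop (𝓝 0) := by
  simpa only [one_div] using tendsto_one_div_add_atTop_nhds_zero_nat (𝕜 := ℝ)

theorem not_summable_inv_natCast_add_one : ¬Summable fun k : ℕ => ((k : ℝ) + 1)⁻¹ := by
  simpa using (summable_nat_add_iff 1).not.mpr Real.not_summable_natCast_inv

theorem log_natCast_add_one_le_sum_inv (n : ℕ) :
    Real.log (n + 1) ≤ ∑ k ∈ Finset.range (n + 1), ((k : ℝ) + 1)⁻¹ :=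
  calc Real.log (n + 1) ≤ Real.log ((n + 1 + 1 : ℕ) : ℝ) :=
        Real.log_le_log (by positivity) (by push_cast; linarith)
    _ ≤ harmonic (n + 1) := log_add_one_le_harmonic (n + 1)
    _ = ∑ k ∈ Finset.range (n + 1), ((k : ℝ) + 1)⁻¹ := by simp [harmonic]

variable {s : ℕ → ℝ}

theorem tendsto_zero_of_antitone_of_summable_harmonic (hs : Antitone s)
    (hsum : Summable fun k : ℕ => s k * ((k : ℝ) + 1)⁻¹) : Tendsto s atTop (𝓝 0) :=
  tendsto_zero_of_antitone_of_summable_mul hs not_summable_inv_natCast_add_one hsum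

theorem tendsto_mul_log_of_antitone (hs : Antitone s)
    (hsum : Summable fun k : ℕ => s k * ((k : ℝ) + 1)⁻¹) :
    Tendsto (fun n : ℕ => s n * Real.log (n + 1)) atTop (𝓝 0) := by
  have hs0 := tendsto_zero_of_antitone_of_summable_harmonic hs hsum
  have s_nonneg := hs.le_of_tendsto hs0
  exact squeeze_zero
    (fun n => mul_nonneg (s_nonneg n) (Real.log_nonneg (by simp)))
    (fun n => mul_le_mul_of_nonneg_left (log_natCast_add_one_le_sum_inv n) (s_nonneg n))
    (tendsto_mul_sum_range_succ_of_antitone hs hs0 (fun k => by positivity) hsum)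

-- The term `k = n + 1` of the left-hand side is a division by zero, hence `0`.
theorem tsum_div_abs_sub_succ_eq (n : ℕ)
    (hsum : Summable fun k : ℕ => s (k + (n + 2)) * ((k : ℝ) + 1)⁻¹) :
    ∑' k : ℕ, s k / |(k : ℝ) - ((n + 1 : ℕ) : ℝ)| =
      ∑ p ∈ antidiagonal n, s p.1 * ((p.2 : ℝ) + 1)⁻¹ +
        ∑' k : ℕ, s (k + (n + 2)) * ((k : ℝ) + 1)⁻¹ := by
  have right_term (k : ℕ) : s (k + (n + 2)) / |((k + (n + 2) : ℕ) : ℝ) - ((n + 1 : ℕ) : ℝ)| =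
      s (k + (n + 2)) * ((k : ℝ) + 1)⁻¹ := by
    have distance : ((k + (n + 2) : ℕ) : ℝ) - ((n + 1 : ℕ) : ℝ) = k + 1 := by push_cast; ring
    rw [distance, abs_of_nonneg (by positivity), div_eq_mul_inv]
  have left_term (k : ℕ) (hk : k ≤ n) :
      s k / |(k : ℝ) - ((n + 1 : ℕ) : ℝ)| = s k * (((n - k : ℕ) : ℝ) + 1)⁻¹ := by
    have distance : (k : ℝ) - ((n + 1 : ℕ) : ℝ) = -(((n - k : ℕ) : ℝ) + 1) := by
      push_cast [Nat.cast_sub hk]; ring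
    rw [distance, abs_neg, abs_of_nonneg (by positivity), div_eq_mul_inv]
  rw [← Summable.sum_add_tsum_nat_add' (k := n + 2) (hsum.congr fun k => (right_term k).symm),
    tsum_congr right_term, Finset.sum_range_succ, sub_self, abs_zero, div_zero, add_zero,
    Finset.Nat.sum_antidiagonal_eq_sum_range_succ (fun i j => s i * ((j : ℝ) + 1)⁻¹),
    Finset.sum_congr rfl fun k hk => left_term k (Finset.mem_range_succ_iff.mp hk)]

theorem tendsto_tsum_div_abs_sub_of_antitone (hs : Antitone s)
    (hsum : Summable fun k : ℕ => s k * ((k : ℝ) + 1)⁻¹) :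
    Tendsto (fun n : ℕ => ∑' k : ℕ, s k / |(k : ℝ) - (n : ℝ)|) atTop (𝓝 0) := by
  have hs0 := tendsto_zero_of_antitone_of_summable_harmonic hs hsum
  have weight_nonneg (k : ℕ) : 0 ≤ ((k : ℝ) + 1)⁻¹ := by positivity
  have le_shift (n k : ℕ) : k ≤ k + (n + 2) := Nat.le_add_right _ _
  have left_sum := tendsto_sum_antidiagonal_mul_of_antitone hs hs0
    antitone_inv_natCast_add_one tendsto_inv_natCast_add_one hsum
  have right_sum := tendsto_tsum_comp_mul_of_antitone hs hs0 weight_nonneg hsum le_shift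
    fun k => tendsto_atTop_mono (fun n => (by omega : n ≤ k + (n + 2))) tendsto_id
  rw [← tendsto_add_atTop_iff_nat 1]
  refine (add_zero (0 : ℝ) ▸ left_sum.add right_sum).congr fun n => ?_
  exact (tsum_div_abs_sub_succ_eq n
    (summable_comp_mul_of_antitone hs hs0 weight_nonneg hsum (le_shift n))).symm

end HarmonicWeights

theorem tsum_ite_div_abs_sub_succ_eq (t : ℕ → ℝ) (n : ℕ) :
    (∑' k : ℕ, if 1 ≤ k ∧ k ≠ n + 1 then t k / |(k : ℝ) - ((n + 1 : ℕ) : ℝ)| else 0) =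
      ∑' k : ℕ, t (k + 1) / |(k : ℝ) - (n : ℝ)| := by
  rw [← (add_left_injective 1).tsum_eq]
  · refine tsum_congr fun k => ?_
    rcases eq_or_ne k n with rfl | hkn
    · simp
    · simp [hkn]
  · intro k hk
    have one_le : 1 ≤ k := by by_contra h; simp [h] at hk
    exact ⟨k - 1, Nat.sub_add_cancel one_le⟩

theorem statement9 (t : ℕ → ℝ) (ht0 : ∀ k, 0 ≤ t k)
    (hmono : ∀ k l : ℕ, 1 ≤ k → k ≤ l → t l ≤ t k)
    (hsum : Summable fun k : ℕ => if 1 ≤ k then t k / k else 0) :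
    Filter.Tendsto (fun n : ℕ => t n * Real.log n) Filter.atTop (nhds 0) ∧
    Filter.Tendsto
      (fun n : ℕ => ∑' k : ℕ, if 1 ≤ k ∧ k ≠ n then t k / |(k : ℝ) - (n : ℝ)| else 0)
      Filter.atTop (nhds 0) := by
  have shift_antitone : Antitone fun k => t (k + 1) :=
    fun k l hkl => hmono (k + 1) (l + 1) (Nat.le_add_left 1 k) (Nat.add_le_add_right hkl 1)
  have shift_summable : Summable fun k : ℕ => t (k + 1) * ((k : ℝ) + 1)⁻¹ := by
    simpa [div_eq_mul_inv] using (summable_nat_add_iff 1).mpr hsum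
  constructor <;> rw [← tendsto_add_atTop_iff_nat 1]
  · simpa using tendsto_mul_log_of_antitone shift_antitone shift_summable
  · simp only [tsum_ite_div_abs_sub_succ_eq]
    exact tendsto_tsum_div_abs_sub_of_antitone shift_antitone shift_summable
end

section
/- Fix a > 1/2 and define t_j := 1/( log j · (log log j)^{2a} ) for integers j ≥ 3. Then Σ_{j ≥ 3} t_j/j < ∞ and Σ_{k ≥ 3, k ≠ n} t_k/|k − n| → 0 as n → ∞. -/
/-!
The series `∑ t_j / j` converges by the integral test, since `(log log x) ^ (1 - p)`,
whose derivative is `1 - p` times `1 / (x log x (log log x) ^ p)`, tends to `0` when `p = 2 a > 1`.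

For the second claim only two properties of `t` matter: `∑ t_k / k` converges, and
`t_k = o(1 / log k)`. Indices `k` outside `[n / 2, 2 n]` satisfy `1 / |k - n| = O(1 / k)` uniformly
in `n`, so their contribution vanishes by dominated convergence. On `[n / 2, 2 n]` the weights are
`o(1 / log n)`, while the kernel `1 / |k - n|` only sums to `O(log n)`.
-/

open Filter Asymptotics MeasureTheory Set
open scoped Topology

section Kernel

theorem sum_range_inv_abs_sub (n : ℕ) :
    ∑ k ∈ Finset.range (2 * n + 1), |(k : ℝ) - n|⁻¹ = 2 * (harmonic n : ℝ) := by
  have harmonic_eq : (harmonic n : ℝ) = ∑ i ∈ Finset.range n, ((i : ℝ) + 1)⁻¹ := by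
    simp [harmonic]
  have left_half : ∑ k ∈ Finset.range n, |(k : ℝ) - n|⁻¹ = harmonic n := by
    rw [harmonic_eq, ← Finset.sum_range_reflect]
    refine Finset.sum_congr rfl fun i hi => ?_
    have hn : (n : ℝ) = (n - 1 - i : ℕ) + (i + 1) := by
      have := Finset.mem_range.mp hi
      exact_mod_cast (by lia : n = (n - 1 - i) + (i + 1))
    rw [abs_sub_comm, hn, add_sub_cancel_left, abs_of_pos (by positivity)]
  have right_half : ∑ i ∈ Finset.range (n + 1), |((n + i : ℕ) : ℝ) - n|⁻¹ = harmonic n := by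
    simp only [Nat.cast_add, add_sub_cancel_left, Nat.abs_cast]
    rw [Finset.sum_range_succ', harmonic_eq]
    simp
  rw [show 2 * n + 1 = n + (n + 1) by ring, Finset.sum_range_add, left_half, right_half, two_mul]

theorem sum_Icc_half_two_mul_inv_abs_sub_le (n : ℕ) :
    ∑ k ∈ Finset.Icc (n / 2) (2 * n), |(k : ℝ) - n|⁻¹ ≤ 2 * (1 + Real.log n) := by
  have subset_range : Finset.Icc (n / 2) (2 * n) ⊆ Finset.range (2 * n + 1) := by
    intro k hk
    simp only [Finset.mem_Icc, Finset.mem_range] at hk ⊢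
    lia
  calc ∑ k ∈ Finset.Icc (n / 2) (2 * n), |(k : ℝ) - n|⁻¹
      ≤ ∑ k ∈ Finset.range (2 * n + 1), |(k : ℝ) - n|⁻¹ :=
        Finset.sum_le_sum_of_subset_of_nonneg subset_range fun _ _ _ => by positivity
    _ = 2 * (harmonic n : ℝ) := sum_range_inv_abs_sub n
    _ ≤ 2 * (1 + Real.log n) := by gcongr; exact harmonic_le_one_add_log n

theorem add_one_le_three_mul_abs_sub {k n : ℕ} (hk : k ∉ Finset.Icc (n / 2) (2 * n)) :
    (k : ℝ) + 1 ≤ 3 * |(k : ℝ) - n| := by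
  rw [Finset.mem_Icc] at hk
  have : (k : ℤ) + 1 ≤ 3 * |(k : ℤ) - n| := by
    rcases abs_cases ((k : ℤ) - n) with h | h <;> lia
  exact_mod_cast this

theorem norm_div_abs_sub_le {k n : ℕ} (hk : k ∉ Finset.Icc (n / 2) (2 * n)) (x : ℝ) :
    ‖x / |(k : ℝ) - n|‖ ≤ 3 * |x / ((k : ℝ) + 1)| := by
  have hdist := add_one_le_three_mul_abs_sub hk
  have hk_pos : (0 : ℝ) < k + 1 := by positivity
  calc ‖x / |(k : ℝ) - n|‖ = |x| / |(k : ℝ) - n| := by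
        rw [Real.norm_eq_abs, abs_div, abs_abs]
    _ ≤ |x| / (((k : ℝ) + 1) / 3) := by gcongr; linarith
    _ = 3 * |x / ((k : ℝ) + 1)| := by rw [abs_div, abs_of_pos hk_pos]; field_simp

end Kernel

section DiscreteHilbertKernel

variable {T : ℕ → ℝ}

theorem summable_div_natCast_add_one (hT : Summable fun k : ℕ => T k / k) :
    Summable fun k : ℕ => T k / ((k : ℝ) + 1) := by
  refine hT.norm.of_norm_bounded_eventually_nat ?_
  filter_upwards [eventually_ge_atTop 1] with k hk
  have hk_pos : (0 : ℝ) < k := by exact_mod_cast hk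
  rw [Real.norm_eq_abs, Real.norm_eq_abs, abs_div, abs_div, abs_of_pos hk_pos,
    abs_of_pos (by positivity : (0 : ℝ) < k + 1)]
  gcongr
  linarith

theorem summable_div_abs_sub (hT : Summable fun k : ℕ => T k / k) (n : ℕ) :
    Summable fun k : ℕ => T k / |(k : ℝ) - n| := by
  refine ((summable_div_natCast_add_one hT).abs.mul_left 3).of_norm_bounded_eventually_nat ?_
  filter_upwards [eventually_gt_atTop (2 * n)] with k hk
  exact norm_div_abs_sub_le (fun hmem => hk.not_ge (Finset.mem_Icc.mp hmem).2) (T k)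

theorem tendsto_const_div_abs_natCast_sub (x y : ℝ) :
    Tendsto (fun n : ℕ => x / |y - n|) atTop (𝓝 0) :=
  (tendsto_abs_atBot_atTop.comp
    (tendsto_atBot_add_const_left _ y
      (tendsto_neg_atTop_atBot.comp tendsto_natCast_atTop_atTop))).const_div_atTop x

theorem tendsto_tsum_indicator_compl_Icc_div_abs_sub (hT : Summable fun k : ℕ => T k / k) :
    Tendsto
      (fun n : ℕ => ∑' k : ℕ,
        (↑(Finset.Icc (n / 2) (2 * n)) : Set ℕ)ᶜ.indicator (fun k => T k / |(k : ℝ) - n|) k)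
      atTop (𝓝 0) := by
  rw [← tsum_zero (α := ℝ) (β := ℕ)]
  refine tendsto_tsum_of_dominated_convergence ((summable_div_natCast_add_one hT).abs.mul_left 3)
    (fun k => ?_) (.of_forall fun n k => ?_)
  · exact squeeze_zero_norm (fun n => norm_indicator_le_norm_self _ k)
      (tendsto_zero_iff_norm_tendsto_zero.mp (tendsto_const_div_abs_natCast_sub (T k) k))
  · by_cases hk : k ∈ (↑(Finset.Icc (n / 2) (2 * n)) : Set ℕ)ᶜ
    · rw [indicator_of_mem hk]
      exact norm_div_abs_sub_le hk (T k)
    · rw [indicator_of_notMem hk, norm_zero]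
      positivity

theorem log_natCast_le_two_mul_log {k n : ℕ} (hk : 3 ≤ k) (hnk : n / 2 ≤ k) :
    Real.log n ≤ 2 * Real.log k := by
  rcases n.eq_zero_or_pos with rfl | hn
  · simpa using Real.log_natCast_nonneg k
  have hsq : n ≤ k ^ 2 := by
    have : n ≤ 2 * k + 1 := by lia
    nlinarith
  calc Real.log n ≤ Real.log ((k : ℝ) ^ 2) :=
        Real.log_le_log (by exact_mod_cast hn) (by exact_mod_cast hsq)
    _ = 2 * Real.log k := by rw [Real.log_pow]; norm_num

theorem eventually_forall_half_le_abs_le_div_log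
    (hT : T =o[atTop] fun k : ℕ => (Real.log k)⁻¹) {ε : ℝ} (hε : 0 < ε) :
    ∀ᶠ n : ℕ in atTop, ∀ k, n / 2 ≤ k → |T k| ≤ ε / Real.log n := by
  obtain ⟨K, hK⟩ := eventually_atTop.mp (hT.def (half_pos hε))
  filter_upwards [eventually_ge_atTop (2 * K + 6)] with n hn k hk
  have hk3 : 3 ≤ k := by lia
  have log_n_pos : 0 < Real.log n := Real.log_pos (by exact_mod_cast (by lia : 1 < n))
  have log_k_pos : 0 < Real.log k := Real.log_pos (by exact_mod_cast (by lia : 1 < k))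
  calc |T k| ≤ ε / 2 * |(Real.log k)⁻¹| := hK k (by lia)
    _ = ε / (2 * Real.log k) := by rw [abs_of_pos (inv_pos.mpr log_k_pos)]; field_simp
    _ ≤ ε / Real.log n := by gcongr; exact log_natCast_le_two_mul_log hk3 hk

theorem tendsto_sum_Icc_div_abs_sub (hT : T =o[atTop] fun k : ℕ => (Real.log k)⁻¹) :
    Tendsto (fun n : ℕ => ∑ k ∈ Finset.Icc (n / 2) (2 * n), T k / |(k : ℝ) - n|)
      atTop (𝓝 0) := by
  refine NormedAddGroup.tendsto_nhds_zero.mpr fun ε hε => ?_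
  have one_lt_log : ∀ᶠ n : ℕ in atTop, 1 < Real.log n :=
    (Real.tendsto_log_atTop.comp tendsto_natCast_atTop_atTop).eventually_gt_atTop 1
  filter_upwards [one_lt_log,
    eventually_forall_half_le_abs_le_div_log hT (by positivity : 0 < ε / 4)] with n hlog hbound
  calc ‖∑ k ∈ Finset.Icc (n / 2) (2 * n), T k / |(k : ℝ) - n|‖
      ≤ ∑ k ∈ Finset.Icc (n / 2) (2 * n), ε / 4 / Real.log n * |(k : ℝ) - n|⁻¹ := by
        refine norm_sum_le_of_le _ fun k hk => ?_
        rw [Real.norm_eq_abs, abs_div, abs_abs, div_eq_mul_inv]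
        gcongr
        exact hbound k (Finset.mem_Icc.mp hk).1
    _ = ε / 4 / Real.log n * ∑ k ∈ Finset.Icc (n / 2) (2 * n), |(k : ℝ) - n|⁻¹ := by
        rw [Finset.mul_sum]
    _ ≤ ε / 4 / Real.log n * (2 * (1 + Real.log n)) := by
        gcongr
        exact sum_Icc_half_two_mul_inv_abs_sub_le n
    _ < ε / 4 / Real.log n * (4 * Real.log n) :=
        mul_lt_mul_of_pos_left (by linarith) (by positivity)
    _ = ε := by field_simp

theorem tendsto_tsum_div_abs_sub (hsum : Summable fun k : ℕ => T k / k)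
    (hlittle : T =o[atTop] fun k : ℕ => (Real.log k)⁻¹) :
    Tendsto (fun n : ℕ => ∑' k : ℕ, T k / |(k : ℝ) - n|) atTop (𝓝 0) := by
  have near_add_far := (tendsto_sum_Icc_div_abs_sub hlittle).add
    (tendsto_tsum_indicator_compl_Icc_div_abs_sub hsum)
  rw [add_zero] at near_add_far
  refine near_add_far.congr fun n => ?_
  rw [← tsum_subtype, (summable_div_abs_sub hsum n).sum_add_tsum_compl]

end DiscreteHilbertKernel

section LogLogWeight

/-- The weight `t` of the theorem as a function of a real variable, with exponent `p = 2 a`. It is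
meaningful for `x > e`; for smaller `x` the values are artefacts of `Real.log` and `Real.rpow`. -/
noncomputable def logLogWeight (p x : ℝ) : ℝ :=
  1 / (Real.log x * Real.log (Real.log x) ^ p)

variable {p x : ℝ}

theorem one_lt_log_of_exp_one_lt (hx : Real.exp 1 < x) : 1 < Real.log x :=
  (Real.lt_log_iff_exp_lt ((Real.exp_pos 1).trans hx)).mpr hx

theorem log_log_pos_of_exp_one_lt (hx : Real.exp 1 < x) : 0 < Real.log (Real.log x) :=
  Real.log_pos (one_lt_log_of_exp_one_lt hx)

theorem tendsto_log_log_atTop : Tendsto (fun x => Real.log (Real.log x)) atTop atTop :=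
  Real.tendsto_log_atTop.comp Real.tendsto_log_atTop

theorem logLogWeight_pos (p : ℝ) (hx : Real.exp 1 < x) : 0 < logLogWeight p x := by
  have := one_lt_log_of_exp_one_lt hx
  have := log_log_pos_of_exp_one_lt hx
  unfold logLogWeight
  positivity

theorem antitoneOn_logLogWeight (hp : 0 ≤ p) :
    AntitoneOn (logLogWeight p) (Ioi (Real.exp 1)) := by
  intro x hx y hy hxy
  have log_pos : 0 < Real.log x := one_pos.trans (one_lt_log_of_exp_one_lt hx)
  have log_nonneg : 0 ≤ Real.log y := zero_le_one.trans (one_lt_log_of_exp_one_lt hy).le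
  have log_log_pos := log_log_pos_of_exp_one_lt hx
  have x_pos : 0 < x := (Real.exp_pos 1).trans hx
  unfold logLogWeight
  gcongr

theorem antitoneOn_logLogWeight_div (hp : 0 ≤ p) :
    AntitoneOn (fun x => logLogWeight p x / x) (Ioi (Real.exp 1)) := by
  intro x hx y hy hxy
  have x_pos : 0 < x := (Real.exp_pos 1).trans hx
  exact div_le_div₀ (logLogWeight_pos p hx).le (antitoneOn_logLogWeight hp hx hy hxy) x_pos hxy

theorem hasDerivAt_log_log_rpow (p : ℝ) (hx : Real.exp 1 < x) :
    HasDerivAt (fun x => Real.log (Real.log x) ^ (1 - p)) ((1 - p) * (logLogWeight p x / x)) x := by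
  have x_pos : 0 < x := (Real.exp_pos 1).trans hx
  have log_pos : 0 < Real.log x := one_pos.trans (one_lt_log_of_exp_one_lt hx)
  have log_log_pos := log_log_pos_of_exp_one_lt hx
  convert ((Real.hasDerivAt_log x_pos.ne').log log_pos.ne').rpow_const (p := 1 - p)
    (Or.inl log_log_pos.ne') using 1
  rw [sub_sub_cancel_left, Real.rpow_neg log_log_pos.le, logLogWeight]
  field_simp

theorem integrableOn_Ioi_logLogWeight_div (hp : 1 < p) {c : ℝ} (hc : Real.exp 1 < c) :
    IntegrableOn (fun x => logLogWeight p x / x) (Ioi c) := by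
  have tendsto_antideriv :
      Tendsto (fun x => Real.log (Real.log x) ^ (1 - p)) atTop (𝓝 0) := by
    have := (tendsto_rpow_neg_atTop (sub_pos.mpr hp)).comp tendsto_log_log_atTop
    rwa [neg_sub] at this
  have deriv_nonpos : ∀ x ∈ Ioi c, (1 - p) * (logLogWeight p x / x) ≤ 0 := fun x hx =>
    mul_nonpos_of_nonpos_of_nonneg (by linarith)
      (div_nonneg (logLogWeight_pos p (hc.trans hx)).le ((Real.exp_pos 1).trans (hc.trans hx)).le)
  have integrable_deriv := integrableOn_Ioi_deriv_of_nonpos'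
    (fun x hx => hasDerivAt_log_log_rpow p (hc.trans_le hx)) deriv_nonpos tendsto_antideriv
  exact (integrable_const_mul_iff (sub_neg.mpr hp).ne.isUnit _).mp integrable_deriv

theorem summable_logLogWeight_div (hp : 1 < p) :
    Summable fun k : ℕ => logLogWeight p k / k := by
  have exp_one_lt_three : Real.exp 1 < (3 : ℕ) := by
    push_cast
    linarith [Real.exp_one_lt_d9]
  refine AntitoneOn.summable_of_integrableOn_Ioi (N := 3)
    ((antitoneOn_logLogWeight_div (by linarith)).mono (Ici_subset_Ioi.mpr exp_one_lt_three))
    (integrableOn_Ioi_logLogWeight_div hp exp_one_lt_three) fun x hx => ?_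
  have hx' : Real.exp 1 < x := exp_one_lt_three.trans hx
  exact div_nonneg (logLogWeight_pos p hx').le ((Real.exp_pos 1).trans hx').le

theorem isLittleO_logLogWeight_inv_log (hp : 0 < p) :
    logLogWeight p =o[atTop] fun x => (Real.log x)⁻¹ := by
  have log_log_rpow_inv : (fun x => (Real.log (Real.log x) ^ p)⁻¹) =o[atTop] fun _ => (1 : ℝ) :=
    (isLittleO_one_iff ℝ).mpr
      ((tendsto_rpow_atTop hp).comp tendsto_log_log_atTop).inv_tendsto_atTop
  refine ((isBigO_refl (fun x => (Real.log x)⁻¹) atTop).mul_isLittleO log_log_rpow_inv).congr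
    (fun x => ?_) fun x => mul_one _
  rw [logLogWeight, one_div, mul_inv]

end LogLogWeight

theorem statement10 (a : ℝ) (ha : 1 / 2 < a) :
    Summable (fun j : ℕ =>
      if 3 ≤ j then (1 / (Real.log j * Real.log (Real.log j) ^ (2 * a))) / j else 0) ∧
    Filter.Tendsto
      (fun n : ℕ => ∑' k : ℕ,
        if 3 ≤ k ∧ k ≠ n then
          (1 / (Real.log k * Real.log (Real.log k) ^ (2 * a))) / |(k : ℝ) - (n : ℝ)| else 0)
      Filter.atTop (nhds 0) := by
  let T : ℕ → ℝ := fun k => if 3 ≤ k then logLogWeight (2 * a) k else 0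
  have T_eventuallyEq : (fun k : ℕ => logLogWeight (2 * a) k) =ᶠ[atTop] T := by
    filter_upwards [eventually_ge_atTop 3] with k hk
    exact (if_pos hk).symm
  have T_summable : Summable fun k : ℕ => T k / k :=
    (summable_logLogWeight_div (by linarith)).congr_atTop (T_eventuallyEq.div .rfl)
  have T_isLittleO : T =o[atTop] fun k : ℕ => (Real.log k)⁻¹ :=
    ((isLittleO_logLogWeight_inv_log (by linarith)).comp_tendsto
      tendsto_natCast_atTop_atTop).congr' T_eventuallyEq .rfl
  refine ⟨T_summable.congr fun j => ?_,
    (tendsto_tsum_div_abs_sub T_summable T_isLittleO).congr fun n => tsum_congr fun k => ?_⟩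
  · simp only [T, ite_div, zero_div, logLogWeight]
  · -- The excluded index contributes `T n / 0 = 0`.
    rcases eq_or_ne k n with rfl | hkn
    · simp
    · simp [T, hkn, ite_div, logLogWeight]
end

section
/- Let a > 1 and set b_m := ⌊m^a⌋ for m ∈ ℕ. Let t : ℕ → [0,∞) satisfy t_j = 0 whenever j is not of the form b_m, and t_{b_m} → 0 as m → ∞. Then there exist C > 0 and N₀ ∈ ℕ such that for all n ≥ N₀: Σ_{j ≠ n} t_j/|n − j| ≤ C · (log n)/n^{1 − 1/a} + max{ t_{b_m} : m ∈ ℕ, n^{1/a} − 2 < m < n^{1/a} + 3 }. -/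
/-!
Put `x = n ^ (1 / a)`, so that `x ^ a = n` and `x ^ (a - 1) = n ^ (1 - 1 / a)`, and sum over `m`
instead of `j = ⌊m ^ a⌋`. At most one `m` lies within `1 / 2` of `x`; its summand is at most
`t ⌊m ^ a⌋`, because distinct integers are at distance at least `1`. For every other `m` below
about `2 * x`, the secant inequality `x ^ (a - 1) * |m - x| ≤ |m ^ a - x ^ a|` survives the floor
up to a factor `2`, and the resulting sum is a harmonic sum divided by `x ^ (a - 1)`. For larger
`m` the distance `|⌊m ^ a⌋ - n|` is comparable to `m ^ a`, and the tail `∑ m ^ (-a)` is of order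
`x ^ (1 - a)`.
-/

open Finset

section FloorRpow

variable {a x y : ℝ}

lemma rpow_sub_one_mul_self (ha : a ≠ 0) (hx : 0 ≤ x) : x ^ (a - 1) * x = x ^ a := by
  rw [← Real.rpow_add_one' hx (by simpa using ha), sub_add_cancel]

lemma rpow_sub_one_mul_abs_sub_le (ha : 1 ≤ a) (hx : 0 ≤ x) (hy : 0 ≤ y) :
    x ^ (a - 1) * |y - x| ≤ |y ^ a - x ^ a| := by
  have ha₀ : a ≠ 0 := by linarith
  rw [← rpow_sub_one_mul_self ha₀ hx, ← rpow_sub_one_mul_self ha₀ hy]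
  rcases le_total x y with hxy | hyx
  · have hpow : x ^ (a - 1) ≤ y ^ (a - 1) := Real.rpow_le_rpow hx hxy (by linarith)
    rw [abs_of_nonneg (sub_nonneg.2 hxy)]
    exact le_trans (by nlinarith) (le_abs_self _)
  · have hpow : y ^ (a - 1) ≤ x ^ (a - 1) := Real.rpow_le_rpow hy hyx (by linarith)
    rw [abs_of_nonpos (sub_nonpos.2 hyx)]
    exact le_trans (by nlinarith) (neg_le_abs _)

lemma abs_sub_sub_one_le_abs_floor_sub (hy : 0 ≤ y) (c : ℝ) :
    |y - c| - 1 ≤ |(⌊y⌋₊ : ℝ) - c| := by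
  linarith [abs_sub_le y ⌊y⌋₊ c, Nat.abs_sub_floor_le hy]

lemma rpow_sub_one_mul_abs_sub_div_two_le_abs_floor_rpow_sub (ha : 1 ≤ a) (hx : 0 ≤ x)
    (hxa : 4 ≤ x ^ (a - 1)) (hy : 0 ≤ y) (hyx : 1 / 2 ≤ |y - x|) :
    x ^ (a - 1) * |y - x| / 2 ≤ |(⌊y ^ a⌋₊ : ℝ) - x ^ a| := by
  have hfloor := abs_sub_sub_one_le_abs_floor_sub (Real.rpow_nonneg hy a) (x ^ a)
  have hsecant := rpow_sub_one_mul_abs_sub_le ha hx hy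
  nlinarith

lemma rpow_div_four_le_abs_floor_rpow_sub (ha : 1 ≤ a) (hx : 0 ≤ x) (hxa : 4 ≤ x ^ a)
    (hy : 2 * x ≤ y) :
    y ^ a / 4 ≤ |(⌊y ^ a⌋₊ : ℝ) - x ^ a| := by
  have hya : 2 * x ^ a ≤ y ^ a := calc
    2 * x ^ a ≤ 2 ^ a * x ^ a := by gcongr; exact Real.self_le_rpow_of_one_le one_le_two ha
    _ = (2 * x) ^ a := (Real.mul_rpow zero_le_two hx).symm
    _ ≤ y ^ a := by gcongr
  have hfloor := abs_sub_sub_one_le_abs_floor_sub (by linarith : 0 ≤ y ^ a) (x ^ a)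
  linarith [le_abs_self (y ^ a - x ^ a)]

lemma one_le_of_one_lt_rpow (ha : 0 ≤ a) (hx : 0 ≤ x) (hxa : 1 < x ^ a) : 1 ≤ x := by
  by_contra! hx1
  exact hxa.not_ge (Real.rpow_le_one hx hx1.le ha)

lemma one_le_log_of_three_le (hx : 3 ≤ x) : 1 ≤ Real.log x := by
  rw [Real.le_log_iff_exp_le (by linarith)]
  linarith [Real.exp_one_lt_d9]

lemma one_add_log_floor_add_one_le (ha : 1 ≤ a) (hx : 0 ≤ x) (hxa : 4 ≤ x ^ (a - 1)) :
    1 + Real.log (⌊x⌋₊ + 1 : ℕ) ≤ 2 * Real.log (x ^ a) := by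
  have hx1 : 1 ≤ x := one_le_of_one_lt_rpow (sub_nonneg.2 ha) hx (by linarith)
  have hxpow : 4 * x ≤ x ^ a := by
    rw [← rpow_sub_one_mul_self (by linarith : a ≠ 0) hx]
    gcongr
  have hone : 1 ≤ Real.log (x ^ a) := one_le_log_of_three_le (by linarith)
  have hlog : Real.log (⌊x⌋₊ + 1 : ℕ) ≤ Real.log (x ^ a) := by
    refine Real.log_le_log (by positivity) ?_
    push_cast
    linarith [Nat.floor_le hx]
  linarith

end FloorRpow

section Sums

variable {a x : ℝ}

lemma sum_rpow_neg_le (ha : 1 < a) {k : ℕ} (hk : 0 < k) {S : Finset ℕ} (hS : ∀ m ∈ S, k < m) :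
    ∑ m ∈ S, (m : ℝ) ^ (-a) ≤ (k : ℝ) ^ (1 - a) / (a - 1) := by
  have hk' : (0 : ℝ) < k := Nat.cast_pos.2 hk
  obtain ⟨L, hL⟩ := S.exists_nat_subset_range
  have hsub : S ⊆ Ico (k + 1) (k + L + 1) := fun m hm ↦ by
    have := hS m hm
    have := mem_range.1 (hL hm)
    simp only [mem_Ico]
    omega
  have hanti : AntitoneOn (fun y : ℝ ↦ y ^ (-a)) (Set.Icc k (k + L : ℕ)) :=
    (Real.antitoneOn_rpow_Ioi_of_exponent_nonpos (by linarith)).mono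
      fun y hy ↦ hk'.trans_le hy.1
  calc ∑ m ∈ S, (m : ℝ) ^ (-a)
      ≤ ∑ m ∈ Ico (k + 1) (k + L + 1), (m : ℝ) ^ (-a) :=
        sum_le_sum_of_subset_of_nonneg hsub fun m _ _ ↦ by positivity
    _ = ∑ m ∈ Ico k (k + L), ((m + 1 : ℕ) : ℝ) ^ (-a) :=
        (sum_Ico_add' (fun m : ℕ ↦ (m : ℝ) ^ (-a)) k (k + L) 1).symm
    _ ≤ ∫ y in Set.Ioi (k : ℝ), y ^ (-a) :=
        hanti.sum_Ico_le_integral (integrableOn_Ioi_rpow_of_lt (by linarith) hk')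
          fun y hy ↦ Real.rpow_nonneg (hk'.trans hy).le _
    _ = (k : ℝ) ^ (1 - a) / (a - 1) := by
        rw [integral_Ioi_rpow_of_lt (by linarith) hk', neg_div, ← div_neg, neg_add_eq_sub, neg_sub]

lemma inv_le_three_mul_inv_natCast_add_one {d : ℝ} {k : ℕ} (hd : 1 / 2 ≤ d) (hk : k ≤ d) :
    d⁻¹ ≤ 3 * ((k + 1 : ℕ) : ℝ)⁻¹ := by
  have hkd : ((k + 1 : ℕ) : ℝ) / 3 ≤ d := by
    push_cast
    linarith
  calc d⁻¹ ≤ (((k + 1 : ℕ) : ℝ) / 3)⁻¹ := by gcongr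
    _ = 3 * ((k + 1 : ℕ) : ℝ)⁻¹ := by rw [inv_div, div_eq_mul_inv]

lemma sum_range_le_mul_one_add_log {f : ℕ → ℝ} {c : ℝ} (hc : 0 ≤ c) {k : ℕ}
    (hf : ∀ i < k, f i ≤ c * ((i + 1 : ℕ) : ℝ)⁻¹) :
    ∑ i ∈ range k, f i ≤ c * (1 + Real.log k) := by
  calc ∑ i ∈ range k, f i ≤ ∑ i ∈ range k, c * ((i + 1 : ℕ) : ℝ)⁻¹ :=
        sum_le_sum fun i hi ↦ hf i (mem_range.1 hi)
    _ = c * (harmonic k : ℝ) := by simp [harmonic, mul_sum]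
    _ ≤ c * (1 + Real.log k) := by gcongr; exact harmonic_le_one_add_log k

lemma sum_inv_abs_sub_le (hx : 0 ≤ x) {S : Finset ℕ} (hS : ∀ m ∈ S, 1 / 2 ≤ |(m : ℝ) - x|)
    (hSx : ∀ m ∈ S, m < 2 * (⌊x⌋₊ + 1)) :
    ∑ m ∈ S, |(m : ℝ) - x|⁻¹ ≤ 6 * (1 + Real.log (⌊x⌋₊ + 1 : ℕ)) := by
  set q := ⌊x⌋₊
  have hqx : (q : ℝ) ≤ x := Nat.floor_le hx
  have hxq : x < q + 1 := Nat.lt_floor_add_one x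
  let f : ℕ → ℝ := fun m ↦ if m ∈ S then |(m : ℝ) - x|⁻¹ else 0
  have hf (m k : ℕ) (hk : k ≤ |(m : ℝ) - x|) : f m ≤ 3 * ((k + 1 : ℕ) : ℝ)⁻¹ := by
    by_cases hm : m ∈ S
    · simpa only [f, if_pos hm] using inv_le_three_mul_inv_natCast_add_one (hS m hm) hk
    · simp only [f, if_neg hm]
      positivity
  have hleft : ∑ i ∈ range (q + 1), f i ≤ 3 * (1 + Real.log (q + 1 : ℕ)) := by
    rw [← sum_range_reflect]
    refine sum_range_le_mul_one_add_log zero_le_three fun i hi ↦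
      hf _ _ (le_trans ?_ (neg_le_abs _))
    rw [add_tsub_cancel_right, Nat.cast_sub (Nat.lt_succ_iff.1 hi)]
    linarith
  have hright : ∑ i ∈ range (q + 1), f (q + 1 + i) ≤ 3 * (1 + Real.log (q + 1 : ℕ)) := by
    refine sum_range_le_mul_one_add_log zero_le_three fun i _ ↦
      hf _ _ (le_trans ?_ (le_abs_self _))
    push_cast
    linarith
  calc ∑ m ∈ S, |(m : ℝ) - x|⁻¹ = ∑ m ∈ range (q + 1 + (q + 1)), f m := by
        rw [sum_ite_mem, inter_eq_right.2 fun m hm ↦ mem_range.2 (two_mul (q + 1) ▸ hSx m hm)]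
    _ ≤ 6 * (1 + Real.log (q + 1 : ℕ)) := by
        rw [sum_range_add]
        linarith

lemma sum_inv_abs_floor_rpow_sub_le_of_lt (ha : 1 ≤ a) (hx : 0 ≤ x) (hxa : 4 ≤ x ^ (a - 1))
    {S : Finset ℕ} (hS : ∀ m ∈ S, 1 / 2 ≤ |(m : ℝ) - x|) (hSx : ∀ m ∈ S, m < 2 * (⌊x⌋₊ + 1)) :
    ∑ m ∈ S, |(⌊(m : ℝ) ^ a⌋₊ : ℝ) - x ^ a|⁻¹ ≤ 24 * Real.log (x ^ a) / x ^ (a - 1) := by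
  calc ∑ m ∈ S, |(⌊(m : ℝ) ^ a⌋₊ : ℝ) - x ^ a|⁻¹
      ≤ ∑ m ∈ S, 2 / x ^ (a - 1) * |(m : ℝ) - x|⁻¹ := by
        refine sum_le_sum fun m hm ↦ ?_
        have hpos : 0 < x ^ (a - 1) * |(m : ℝ) - x| / 2 := by
          have := hS m hm
          positivity
        calc |(⌊(m : ℝ) ^ a⌋₊ : ℝ) - x ^ a|⁻¹ ≤ (x ^ (a - 1) * |(m : ℝ) - x| / 2)⁻¹ :=
              inv_anti₀ hpos (rpow_sub_one_mul_abs_sub_div_two_le_abs_floor_rpow_sub ha hx hxa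
                m.cast_nonneg (hS m hm))
          _ = 2 / x ^ (a - 1) * |(m : ℝ) - x|⁻¹ := by
              rw [inv_div, div_mul_eq_div_div, div_eq_mul_inv]
    _ ≤ 2 / x ^ (a - 1) * (6 * (1 + Real.log (⌊x⌋₊ + 1 : ℕ))) := by
        rw [← mul_sum]
        gcongr
        exact sum_inv_abs_sub_le hx hS hSx
    _ ≤ 2 / x ^ (a - 1) * (6 * (2 * Real.log (x ^ a))) := by
        gcongr
        exact one_add_log_floor_add_one_le ha hx hxa
    _ = 24 * Real.log (x ^ a) / x ^ (a - 1) := by ring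

lemma sum_inv_abs_floor_rpow_sub_le_of_ge (ha : 1 < a) (hx : 0 < x) (hxa : 4 ≤ x ^ a)
    {S : Finset ℕ} (hSx : ∀ m ∈ S, 2 * (⌊x⌋₊ + 1) ≤ m) :
    ∑ m ∈ S, |(⌊(m : ℝ) ^ a⌋₊ : ℝ) - x ^ a|⁻¹ ≤ 4 / (a - 1) / x ^ (a - 1) := by
  have hxq : x < ⌊x⌋₊ + 1 := Nat.lt_floor_add_one x
  have hq : x ≤ (2 * ⌊x⌋₊ + 1 : ℕ) := by
    push_cast
    linarith [Nat.cast_nonneg (α := ℝ) ⌊x⌋₊]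
  calc ∑ m ∈ S, |(⌊(m : ℝ) ^ a⌋₊ : ℝ) - x ^ a|⁻¹ ≤ ∑ m ∈ S, 4 * (m : ℝ) ^ (-a) := by
        refine sum_le_sum fun m hm ↦ ?_
        have hm2 : 2 * x ≤ m := by
          have : (2 * (⌊x⌋₊ + 1) : ℝ) ≤ m := mod_cast hSx m hm
          linarith
        have hm : (0 : ℝ) < m := by linarith
        calc |(⌊(m : ℝ) ^ a⌋₊ : ℝ) - x ^ a|⁻¹ ≤ ((m : ℝ) ^ a / 4)⁻¹ :=
              inv_anti₀ (by positivity) (rpow_div_four_le_abs_floor_rpow_sub ha.le hx.le hxa hm2)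
          _ = 4 * (m : ℝ) ^ (-a) := by rw [inv_div, Real.rpow_neg hm.le, div_eq_mul_inv]
    _ ≤ 4 * (((2 * ⌊x⌋₊ + 1 : ℕ) : ℝ) ^ (1 - a) / (a - 1)) := by
        rw [← mul_sum]
        gcongr
        exact sum_rpow_neg_le ha (Nat.succ_pos _) fun m hm ↦ hSx m hm
    _ ≤ 4 * (x ^ (1 - a) / (a - 1)) := by
        have : 0 < a - 1 := sub_pos.2 ha
        gcongr 4 * (?_ / _)
        exact Real.rpow_le_rpow_of_nonpos hx hq (by linarith)
    _ = 4 / (a - 1) / x ^ (a - 1) := by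
        rw [← neg_sub a 1, Real.rpow_neg hx.le]
        ring

lemma sum_inv_abs_floor_rpow_sub_le (ha : 1 < a) (hx : 0 ≤ x) (hxa : 4 ≤ x ^ (a - 1))
    {S : Finset ℕ} (hS : ∀ m ∈ S, 1 / 2 ≤ |(m : ℝ) - x|) :
    ∑ m ∈ S, |(⌊(m : ℝ) ^ a⌋₊ : ℝ) - x ^ a|⁻¹ ≤
      (24 + 4 / (a - 1)) * Real.log (x ^ a) / x ^ (a - 1) := by
  have ha₁ : 0 < a - 1 := sub_pos.2 ha
  have hx1 : 1 ≤ x := one_le_of_one_lt_rpow ha₁.le hx (by linarith)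
  have hxa' : 4 ≤ x ^ a := hxa.trans (Real.rpow_le_rpow_of_exponent_le hx1 (by linarith))
  have hlog : 1 ≤ Real.log (x ^ a) := one_le_log_of_three_le (by linarith)
  have hlow := sum_inv_abs_floor_rpow_sub_le_of_lt ha.le hx hxa (S := {m ∈ S | m < 2 * (⌊x⌋₊ + 1)})
    (fun m hm ↦ hS m (mem_filter.1 hm).1) fun m hm ↦ (mem_filter.1 hm).2
  have hhigh := sum_inv_abs_floor_rpow_sub_le_of_ge ha (by linarith) hxa'
    (S := {m ∈ S | ¬ m < 2 * (⌊x⌋₊ + 1)}) fun m hm ↦ not_lt.1 (mem_filter.1 hm).2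
  calc ∑ m ∈ S, |(⌊(m : ℝ) ^ a⌋₊ : ℝ) - x ^ a|⁻¹
      ≤ 24 * Real.log (x ^ a) / x ^ (a - 1) + 4 / (a - 1) / x ^ (a - 1) := by
        rw [← sum_filter_add_sum_filter_not S (· < 2 * (⌊x⌋₊ + 1))]
        exact add_le_add hlow hhigh
    _ ≤ 24 * Real.log (x ^ a) / x ^ (a - 1) +
          4 / (a - 1) / x ^ (a - 1) * Real.log (x ^ a) := by
        gcongr
        exact le_mul_of_one_le_right (by positivity) hlog
    _ = (24 + 4 / (a - 1)) * Real.log (x ^ a) / x ^ (a - 1) := by ring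

lemma sum_le_of_abs_sub_lt_half {f : ℕ → ℝ} {M : ℝ} (hM : 0 ≤ M) {S : Finset ℕ}
    (hS : ∀ m ∈ S, |(m : ℝ) - x| < 1 / 2) (hf : ∀ m ∈ S, f m ≤ M) : ∑ m ∈ S, f m ≤ M := by
  have hcard : #S ≤ 1 := by
    refine card_le_one.2 fun i hi j hj ↦ ?_
    have hi' := abs_lt.1 (hS i hi)
    have hj' := abs_lt.1 (hS j hj)
    have hij : (i : ℝ) < j + 1 := by linarith
    have hji : (j : ℝ) < i + 1 := by linarith
    norm_cast at hij hji
    omega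
  calc ∑ m ∈ S, f m ≤ #S • M := sum_le_card_nsmul _ _ _ hf
    _ ≤ 1 • M := nsmul_le_nsmul_left hM hcard
    _ = M := one_nsmul M

-- For `j = n` the quotient is `c / 0 = 0`.
lemma div_abs_natCast_sub_le_self {c : ℝ} (hc : 0 ≤ c) (j n : ℕ) : c / |(j : ℝ) - n| ≤ c := by
  rcases eq_or_ne j n with rfl | hjn
  · simpa using hc
  · have hdist : (1 : ℤ) ≤ |(j : ℤ) - n| := Int.one_le_abs (sub_ne_zero.2 (mod_cast hjn))
    exact div_le_self hc (mod_cast hdist)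

lemma sum_div_abs_floor_rpow_sub_le (ha : 1 < a) (hx : 0 ≤ x) (hxa : 4 ≤ x ^ (a - 1)) {n : ℕ}
    (hxn : x ^ a = n) {u : ℕ → ℝ} (hu : ∀ m, 0 ≤ u m) {T : ℝ} (huT : ∀ m, u m ≤ T) {M : ℝ}
    (hM : 0 ≤ M) (huM : ∀ m : ℕ, |(m : ℝ) - x| < 1 / 2 → u m ≤ M) (S : Finset ℕ) :
    ∑ m ∈ S, u m / |(⌊(m : ℝ) ^ a⌋₊ : ℝ) - n| ≤
      T * (24 + 4 / (a - 1)) * Real.log n / x ^ (a - 1) + M := by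
  have hT : 0 ≤ T := (hu 0).trans (huT 0)
  set near : Finset ℕ := {m ∈ S | |(m : ℝ) - x| < 1 / 2}
  set far : Finset ℕ := {m ∈ S | ¬ |(m : ℝ) - x| < 1 / 2}
  have hnear : ∑ m ∈ near, u m / |(⌊(m : ℝ) ^ a⌋₊ : ℝ) - n| ≤ M :=
    sum_le_of_abs_sub_lt_half hM (fun m hm ↦ (mem_filter.1 hm).2) fun m hm ↦
      (div_abs_natCast_sub_le_self (hu m) _ n).trans (huM m (mem_filter.1 hm).2)
  have hfar : ∑ m ∈ far, u m / |(⌊(m : ℝ) ^ a⌋₊ : ℝ) - n| ≤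
      T * (24 + 4 / (a - 1)) * Real.log n / x ^ (a - 1) := calc
    _ ≤ ∑ m ∈ far, T * |(⌊(m : ℝ) ^ a⌋₊ : ℝ) - x ^ a|⁻¹ := by
        refine sum_le_sum fun m _ ↦ ?_
        rw [hxn, div_eq_mul_inv]
        gcongr
        exact huT m
    _ ≤ T * ((24 + 4 / (a - 1)) * Real.log (x ^ a) / x ^ (a - 1)) := by
        rw [← mul_sum]
        gcongr
        exact sum_inv_abs_floor_rpow_sub_le ha hx hxa fun m hm ↦ not_lt.1 (mem_filter.1 hm).2
    _ = T * (24 + 4 / (a - 1)) * Real.log n / x ^ (a - 1) := by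
        rw [hxn]
        ring
  rw [← sum_filter_add_sum_filter_not S (fun m : ℕ ↦ |(m : ℝ) - x| < 1 / 2), add_comm]
  exact add_le_add hfar hnear

end Sums

lemma sum_le_of_forall_sum_comp_le {ι κ : Type*} {b : ι → κ} {f : κ → ℝ} {R : ℝ}
    (hb : Function.support f ⊆ Set.range b) (hR : ∀ S : Finset ι, ∑ i ∈ S, f (b i) ≤ R)
    (s : Finset κ) : ∑ j ∈ s, f j ≤ R := by
  classical
  have hsurj : Set.SurjOn b Set.univ ({j ∈ s | f j ≠ 0} : Finset κ) := fun j hj ↦ by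
    simpa using hb (mem_filter.1 hj).2
  obtain ⟨S, -, hinj, himage⟩ := exists_subset_injOn_image_eq_of_surjOn _ _ hsurj
  rw [← sum_filter_ne_zero, ← himage, sum_image hinj]
  exact hR S

/-- The summand at `j` of the sum `∑ t j / |n - j|` over positive `j ≠ n`, extended by zero. -/
noncomputable def offDiagTerm (t : ℕ → ℝ) (n j : ℕ) : ℝ :=
  if 1 ≤ j ∧ j ≠ n then t j / |(j : ℝ) - (n : ℝ)| else 0

/-- The values of `t` along `⌊m ^ a⌋` for the positive integers `m` in the window
`(x - 2, x + 3)`; at `x = n ^ (1 / a)` its supremum is the maximum in the main estimate. -/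
def windowValues (a : ℝ) (t : ℕ → ℝ) (x : ℝ) : Set ℝ :=
  {y | ∃ m : ℕ, 1 ≤ m ∧ x - 2 < (m : ℝ) ∧ (m : ℝ) < x + 3 ∧ y = t ⌊(m : ℝ) ^ a⌋₊}

section Term

variable {a : ℝ} {t : ℕ → ℝ}

lemma offDiagTerm_nonneg (ht : ∀ j, 0 ≤ t j) (n : ℕ) : 0 ≤ offDiagTerm t n := fun j ↦ by
  have := ht j
  unfold offDiagTerm
  positivity

lemma offDiagTerm_le_div_abs_sub {j : ℕ} (ht : 0 ≤ t j) (n : ℕ) :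
    offDiagTerm t n j ≤ t j / |(j : ℝ) - n| := by
  unfold offDiagTerm
  split_ifs
  · rfl
  · positivity

lemma support_offDiagTerm_subset_range {b : ℕ → ℕ}
    (hsupp : ∀ j, 1 ≤ j → j ∉ Set.range b → t j = 0) (n : ℕ) :
    Function.support (offDiagTerm t n) ⊆ Set.range b := by
  intro j hj
  by_contra hjb
  refine hj ?_
  unfold offDiagTerm
  split_ifs with h
  · rw [hsupp j h.1 hjb, zero_div]
  · rfl

lemma sSup_windowValues_nonneg (ht : ∀ j, 0 ≤ t j) (x : ℝ) : 0 ≤ sSup (windowValues a t x) :=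
  Real.sSup_nonneg fun _ ⟨_, _, _, _, hy⟩ ↦ hy ▸ ht _

lemma le_sSup_windowValues (hbdd : BddAbove (Set.range fun m : ℕ ↦ t ⌊(m : ℝ) ^ a⌋₊)) {x : ℝ}
    (hx : 1 ≤ x) {m : ℕ} (hm : |(m : ℝ) - x| < 1 / 2) :
    t ⌊(m : ℝ) ^ a⌋₊ ≤ sSup (windowValues a t x) := by
  have hsub : windowValues a t x ⊆ Set.range fun m : ℕ ↦ t ⌊(m : ℝ) ^ a⌋₊ :=
    fun _ ⟨m, _, _, _, hy⟩ ↦ ⟨m, hy.symm⟩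
  obtain ⟨hlow, hhigh⟩ := abs_lt.1 hm
  have hm_pos : (0 : ℝ) < m := by linarith
  exact le_csSup (hbdd.mono hsub) ⟨m, mod_cast hm_pos, by linarith, by linarith, rfl⟩

lemma sum_offDiagTerm_le (ha : 1 < a) (ht : ∀ j, 0 ≤ t j)
    (hsupp : ∀ j, 1 ≤ j → (j ∉ Set.range fun m : ℕ ↦ ⌊(m : ℝ) ^ a⌋₊) → t j = 0)
    {T : ℝ} (hT : ∀ m : ℕ, t ⌊(m : ℝ) ^ a⌋₊ ≤ T) {n : ℕ} (hn : 4 ≤ (n : ℝ) ^ (1 - 1 / a))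
    (s : Finset ℕ) :
    ∑ j ∈ s, offDiagTerm t n j ≤ T * (24 + 4 / (a - 1)) * Real.log n / (n : ℝ) ^ (1 - 1 / a) +
      sSup (windowValues a t ((n : ℝ) ^ (1 / a))) := by
  have ha₀ : a ≠ 0 := by linarith
  set x : ℝ := (n : ℝ) ^ (1 / a) with hx
  have hx₀ : 0 ≤ x := Real.rpow_nonneg n.cast_nonneg _
  have hxn : x ^ a = n := by rw [hx, one_div, Real.rpow_inv_rpow n.cast_nonneg ha₀]
  have hxa : x ^ (a - 1) = (n : ℝ) ^ (1 - 1 / a) := by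
    rw [hx, ← Real.rpow_mul n.cast_nonneg, mul_sub, one_div_mul_cancel ha₀, mul_one]
  rw [← hxa] at hn ⊢
  have hx₁ : 1 ≤ x := one_le_of_one_lt_rpow (sub_nonneg.2 ha.le) hx₀ (by linarith)
  have hbdd : BddAbove (Set.range fun m : ℕ ↦ t ⌊(m : ℝ) ^ a⌋₊) := ⟨T, Set.forall_mem_range.2 hT⟩
  refine sum_le_of_forall_sum_comp_le (support_offDiagTerm_subset_range hsupp n) (fun S ↦ ?_) s
  calc ∑ m ∈ S, offDiagTerm t n ⌊(m : ℝ) ^ a⌋₊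
      ≤ ∑ m ∈ S, t ⌊(m : ℝ) ^ a⌋₊ / |(⌊(m : ℝ) ^ a⌋₊ : ℝ) - n| :=
        sum_le_sum fun m _ ↦ offDiagTerm_le_div_abs_sub (ht _) n
    _ ≤ _ := sum_div_abs_floor_rpow_sub_le ha hx₀ hn hxn (fun _ ↦ ht _) hT
        (sSup_windowValues_nonneg ht x) (fun m hm ↦ le_sSup_windowValues hbdd hx₁ hm) S

end Term

theorem statement11_general (a : ℝ) (ha : 1 < a) (t : ℕ → ℝ) (ht0 : ∀ j, 0 ≤ t j)
    (hsupp : ∀ j : ℕ, 1 ≤ j → (¬ ∃ m : ℕ, 1 ≤ m ∧ ⌊(m : ℝ) ^ a⌋₊ = j) → t j = 0)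
    (hbdd : BddAbove (Set.range fun m : ℕ => t ⌊(m : ℝ) ^ a⌋₊)) :
    ∃ C > (0 : ℝ), ∃ N₀ : ℕ, ∀ n : ℕ, N₀ ≤ n →
      (Summable fun j : ℕ => if 1 ≤ j ∧ j ≠ n then t j / |(j : ℝ) - (n : ℝ)| else 0) ∧
      (∑' j : ℕ, if 1 ≤ j ∧ j ≠ n then t j / |(j : ℝ) - (n : ℝ)| else 0)
        ≤ C * Real.log n / (n : ℝ) ^ (1 - 1 / a)
          + sSup {x : ℝ | ∃ m : ℕ, 1 ≤ m ∧ (n : ℝ) ^ (1 / a) - 2 < (m : ℝ) ∧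
              (m : ℝ) < (n : ℝ) ^ (1 / a) + 3 ∧ x = t ⌊(m : ℝ) ^ a⌋₊} := by
  have : 0 < a - 1 := sub_pos.2 ha
  obtain ⟨T, hT, htT⟩ : ∃ T > 0, ∀ m : ℕ, t ⌊(m : ℝ) ^ a⌋₊ ≤ T := by
    obtain ⟨B, hB⟩ := hbdd
    exact ⟨max B 1, by positivity, fun m ↦ le_max_of_le_left (hB ⟨m, rfl⟩)⟩
  have hrange (j : ℕ) (hj : 1 ≤ j) (hjr : j ∉ Set.range fun m : ℕ ↦ ⌊(m : ℝ) ^ a⌋₊) : t j = 0 :=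
    hsupp j hj fun ⟨m, _, hm⟩ ↦ hjr ⟨m, hm⟩
  have hlarge : ∀ᶠ n : ℕ in Filter.atTop, 4 ≤ (n : ℝ) ^ (1 - 1 / a) :=
    ((tendsto_rpow_atTop (sub_pos.2 ((div_lt_one (by linarith)).2 ha))).comp
      tendsto_natCast_atTop_atTop).eventually_ge_atTop 4
  obtain ⟨N₀, hN₀⟩ := Filter.eventually_atTop.1 hlarge
  refine ⟨T * (24 + 4 / (a - 1)), by positivity, N₀, fun n hn ↦ ?_⟩
  have hsum := sum_offDiagTerm_le ha ht0 hrange htT (hN₀ n hn)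
  exact ⟨summable_of_sum_le (offDiagTerm_nonneg ht0 n) hsum,
    Real.tsum_le_of_sum_le (offDiagTerm_nonneg ht0 n) hsum⟩

theorem statement11 (a : ℝ) (ha : 1 < a) (t : ℕ → ℝ) (ht0 : ∀ j, 0 ≤ t j)
    (hsupp : ∀ j : ℕ, 1 ≤ j → (¬ ∃ m : ℕ, 1 ≤ m ∧ ⌊(m : ℝ) ^ a⌋₊ = j) → t j = 0)
    (hlim : Filter.Tendsto (fun m : ℕ => t ⌊(m : ℝ) ^ a⌋₊) Filter.atTop (nhds 0)) :
    ∃ C > (0 : ℝ), ∃ N₀ : ℕ, ∀ n : ℕ, N₀ ≤ n →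
      (∑' j : ℕ, if 1 ≤ j ∧ j ≠ n then t j / |(j : ℝ) - (n : ℝ)| else 0)
        ≤ C * Real.log n / (n : ℝ) ^ (1 - 1 / a)
          + sSup {x : ℝ | ∃ m : ℕ, 1 ≤ m ∧ (n : ℝ) ^ (1 / a) - 2 < (m : ℝ) ∧
              (m : ℝ) < (n : ℝ) ^ (1 / a) + 3 ∧ x = t ⌊(m : ℝ) ^ a⌋₊} := by
  obtain ⟨C, hC, N₀, hbound⟩ := statement11_general a ha t ht0 hsupp hlim.bddAbove_range
  exact ⟨C, hC, N₀, fun n hn ↦ (hbound n hn).2⟩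
end

section
/- For every integer k ≥ 3, the series Σ_{n ≥ 3, n ≠ k} (1/|n − k|) · Σ_{j ≥ 3, j ≠ n} 1/( (log j)² · |n − j| ) diverges to +∞. -/
open scoped ENNReal

/-!
The terms with `j < n` alone force divergence. For a nonnegative antitone weight `w`, they bound the
inner sum `∑ w j / |n - j|` from below by `w n * H (n - 3)`, where `H` denotes the harmonic numbers,
hence by `w n * log n / 2` for large `n`. The outer sum thus dominates a multiple of
`∑ w n * log n / n`, which for `w j = 1 / log j ^ 2` is the divergent series `∑ 1 / (n * log n)`.
The inner sums themselves converge, by comparison with `∑ 1 / (j * log j ^ 2)`.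
-/

open Filter Finset

theorem antitoneOn_one_div_log_pow (p : ℕ) :
    AntitoneOn (fun n : ℕ ↦ 1 / Real.log n ^ p) (Set.Ici 2) := by
  intro m (hm : 2 ≤ m) n _ hmn
  have log_pos : 0 < Real.log m := Real.log_pos (by exact_mod_cast hm)
  dsimp only
  gcongr

-- For `p ≠ 0`, the terms at `n = 0` and `n = 1` vanish because `1 / 0 = 0`.
theorem summable_one_div_mul_log_pow_iff {p : ℕ} :
    Summable (fun n : ℕ ↦ 1 / (n * Real.log n ^ p)) ↔ 1 < p := by
  have nonneg : ∀ n : ℕ, 0 ≤ 1 / (n * Real.log n ^ p) := fun n ↦ by positivity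
  have antitone : ∀ᶠ n : ℕ in atTop,
      1 / ((n + 1 : ℕ) * Real.log (n + 1 : ℕ) ^ p) ≤ 1 / (n * Real.log n ^ p) := by
    filter_upwards [eventually_ge_atTop 2] with n hn
    have log_pos : 0 < Real.log n := Real.log_pos (by exact_mod_cast hn)
    gcongr <;> exact n.le_succ
  have condensed : ∀ m : ℕ, (2 : ℝ) ^ m * (1 / ((2 ^ m : ℕ) * Real.log (2 ^ m : ℕ) ^ p)) =
      (Real.log 2 ^ p)⁻¹ * (1 / (m : ℝ) ^ p) := fun m ↦ by
    rw [Nat.cast_pow, Nat.cast_two, Real.log_pow, mul_pow]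
    field_simp
  have factor_ne_zero : (Real.log 2 ^ p)⁻¹ ≠ 0 := by positivity
  rw [← summable_condensed_iff_of_eventually_nonneg (.of_forall nonneg) antitone]
  simp_rw [condensed]
  rw [summable_mul_left_iff factor_ne_zero, Real.summable_one_div_nat_pow]

theorem sum_Ico_one_div_sub_eq_harmonic {N n : ℕ} (hNn : N ≤ n) :
    ∑ j ∈ Ico N n, 1 / ((n : ℝ) - j) = harmonic (n - N) := by
  obtain ⟨m, rfl⟩ := Nat.exists_eq_add_of_le hNn
  rw [sum_Ico_eq_sum_range, Nat.add_sub_cancel_left, harmonic, ← sum_range_reflect, Rat.cast_sum]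
  refine sum_congr rfl fun i hi ↦ ?_
  have cast_eq : ((N + m : ℕ) : ℝ) = (N + (m - 1 - i) : ℕ) + (i + 1 : ℕ) := by
    norm_cast
    grind
  rw [cast_eq, add_sub_cancel_left, one_div, Rat.cast_inv, Rat.cast_natCast]

theorem half_log_le_harmonic_sub {N n : ℕ} (hn : 2 * N ≤ n) :
    Real.log n / 2 ≤ harmonic (n - N) := by
  obtain rfl | n_pos := n.eq_zero_or_pos
  · simp [harmonic]
  have le_sq : n ≤ (n - N + 1) ^ 2 := by
    have : n ≤ 2 * (n - N) := by omega
    nlinarith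
  have log_le : Real.log n ≤ 2 * Real.log (n - N + 1 : ℕ) := by
    rw [← Nat.cast_two, ← Real.log_pow]
    gcongr
    exact_mod_cast le_sq
  linarith [log_add_one_le_harmonic (n - N)]

section AntitoneWeight

variable {w : ℕ → ℝ} {N : ℕ}

theorem summable_div_abs_sub_s15 (hsum : Summable fun j : ℕ ↦ w j / j) (x : ℝ) :
    Summable fun j : ℕ ↦ w j / |x - j| := by
  refine .of_norm_bounded_eventually_nat (hsum.norm.mul_left 2) ?_
  filter_upwards [eventually_ge_atTop 1,
    tendsto_natCast_atTop_atTop.eventually_ge_atTop (2 * |x|)] with j hj hxj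
  have half_le : (j : ℝ) / 2 ≤ |x - j| := by
    linarith [abs_sub_abs_le_abs_sub (j : ℝ) x, abs_sub_comm x j, le_abs_self (j : ℝ)]
  calc ‖w j / |x - j|‖ = |w j| / |x - j| := by simp
    _ ≤ |w j| / (j / 2) := by gcongr
    _ = 2 * ‖w j / j‖ := by rw [norm_div, Real.norm_eq_abs, Real.norm_natCast]; field_simp

theorem summable_ite_div_abs_sub (hsum : Summable fun j : ℕ ↦ w j / j) (n : ℕ) :
    Summable fun j : ℕ ↦ if N ≤ j ∧ j ≠ n then w j / |(n : ℝ) - j| else 0 := by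
  refine ((summable_div_abs_sub_s15 hsum n).indicator {j | N ≤ j ∧ j ≠ n}).congr fun j ↦ ?_
  simp [Set.indicator_apply]

theorem mul_half_log_le_tsum_div_abs_sub (hw_nonneg : ∀ j, N ≤ j → 0 ≤ w j)
    (hw : AntitoneOn w (Set.Ici N)) (hsum : Summable fun j : ℕ ↦ w j / j)
    {n : ℕ} (hn : 2 * N ≤ n) :
    w n * (Real.log n / 2) ≤
      ∑' j : ℕ, if N ≤ j ∧ j ≠ n then w j / |(n : ℝ) - j| else 0 := by
  have hNn : N ≤ n := by omega
  calc w n * (Real.log n / 2)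
      ≤ w n * harmonic (n - N) :=
        mul_le_mul_of_nonneg_left (half_log_le_harmonic_sub hn) (hw_nonneg n hNn)
    _ = ∑ j ∈ Ico N n, w n * (1 / ((n : ℝ) - j)) := by
        rw [← sum_Ico_one_div_sub_eq_harmonic hNn, mul_sum]
    _ ≤ ∑ j ∈ Ico N n, if N ≤ j ∧ j ≠ n then w j / |(n : ℝ) - j| else 0 := by
        refine sum_le_sum fun j hj ↦ ?_
        obtain ⟨hNj, hjn⟩ := mem_Ico.mp hj
        have sub_pos : 0 < (n : ℝ) - j := sub_pos.mpr (by exact_mod_cast hjn)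
        rw [if_pos ⟨hNj, hjn.ne⟩, abs_of_pos sub_pos, mul_one_div]
        gcongr
        exact hw hNj hNn hjn.le
    _ ≤ _ := (summable_ite_div_abs_sub hsum n).sum_le_tsum _ fun j _ ↦ by
        split_ifs with hj
        · exact div_nonneg (hw_nonneg j hj.1) (abs_nonneg _)
        · rfl

theorem tsum_one_div_abs_sub_mul_tsum_div_abs_sub_eq_top (hw_nonneg : ∀ j, N ≤ j → 0 ≤ w j)
    (hw : AntitoneOn w (Set.Ici N)) (hsum : Summable fun j : ℕ ↦ w j / j)
    (hdiv : ¬ Summable fun n : ℕ ↦ w n * Real.log n / n) (k : ℝ) :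
    (∑' n : ℕ, if N ≤ n ∧ (n : ℝ) ≠ k then
        ENNReal.ofReal ((1 / |(n : ℝ) - k|) *
          ∑' j : ℕ, if N ≤ j ∧ j ≠ n then w j / |(n : ℝ) - j| else 0)
      else 0) = ⊤ := by
  by_contra hfin
  refine hdiv (.of_norm_bounded_eventually_nat ((ENNReal.summable_toReal hfin).mul_left 4) ?_)
  filter_upwards [eventually_ge_atTop (2 * N),
    tendsto_natCast_atTop_atTop.eventually_gt_atTop |k|] with n hn hkn
  have hNn : N ≤ n := by omega
  have hne : (n : ℝ) ≠ k := ((le_abs_self k).trans_lt hkn).ne'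
  have dist_le : |(n : ℝ) - k| ≤ 2 * n := by
    linarith [abs_sub (n : ℝ) k, Nat.abs_cast (R := ℝ) n]
  have w_mul_log_nonneg : 0 ≤ w n * Real.log n :=
    mul_nonneg (hw_nonneg n hNn) (Real.log_natCast_nonneg n)
  have inner_ge := mul_half_log_le_tsum_div_abs_sub hw_nonneg hw hsum hn
  rw [if_pos ⟨hNn, hne⟩, ENNReal.toReal_ofReal (mul_nonneg (by positivity) (by linarith)),
    Real.norm_of_nonneg (by positivity)]
  calc w n * Real.log n / n = 2 * (w n * Real.log n) / (2 * n) := by field_simp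
    _ ≤ 2 * (w n * Real.log n) / |(n : ℝ) - k| := by gcongr
    _ = 4 * (1 / |(n : ℝ) - k| * (w n * (Real.log n / 2))) := by ring
    _ ≤ _ := by gcongr

end AntitoneWeight

theorem statement15_general (k : ℝ) :
    (∑' n : ℕ, if 3 ≤ n ∧ (n : ℝ) ≠ k then
        ENNReal.ofReal ((1 / |(n : ℝ) - k|) *
          ∑' j : ℕ, (if 3 ≤ j ∧ j ≠ n then
            1 / (Real.log j ^ 2 * |(n : ℝ) - (j : ℝ)|) else 0))
      else 0) = ⊤ := by
  have antitone : AntitoneOn (fun j : ℕ ↦ 1 / Real.log j ^ 2) (Set.Ici 3) :=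
    (antitoneOn_one_div_log_pow 2).mono (Set.Ici_subset_Ici.mpr (by norm_num))
  have summable : Summable fun j : ℕ ↦ 1 / Real.log j ^ 2 / j := by
    simpa only [div_div, mul_comm] using summable_one_div_mul_log_pow_iff.mpr one_lt_two
  have not_summable : ¬ Summable fun n : ℕ ↦ 1 / Real.log n ^ 2 * Real.log n / n := by
    have weight_mul_log : ∀ n : ℕ, 1 / Real.log n ^ 2 * Real.log n / n =
        1 / (n * Real.log n ^ 1) := fun n ↦ by field_simp
    simp_rw [weight_mul_log, summable_one_div_mul_log_pow_iff, lt_irrefl, not_false_eq_true]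
  simpa only [div_div] using tsum_one_div_abs_sub_mul_tsum_div_abs_sub_eq_top
    (fun j _ ↦ by positivity) antitone summable not_summable k

theorem statement15 (k : ℕ) (hk : 3 ≤ k) :
    (∑' n : ℕ, if 3 ≤ n ∧ n ≠ k then
        ENNReal.ofReal ((1 / |(n : ℝ) - (k : ℝ)|) *
          ∑' j : ℕ, (if 3 ≤ j ∧ j ≠ n then
            1 / (Real.log j ^ 2 * |(n : ℝ) - (j : ℝ)|) else 0))
      else 0) = ⊤ := by
  simpa only [ne_eq, Nat.cast_inj] using statement15_general k
end
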